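/- arXiv:1601.07276 — 5 statements merged into one kernel-verified Lean document; each statement's English description precedes it below -/
import Mathlib

section
/- Let X be a complete metric space, Y a separable metric space, and T_n : X → Y (n ≥ 0) continuous maps. Let 𝒜 = ⋃_{δ∈D} ⋂_{μ∈M} 𝒜_{δ,μ} be an upper Furstenberg family. Suppose that for any nonempty open subset V of Y there is some δ ∈ D such that for any nonempty open subset U of X there is some x ∈ U with {n ≥ 0 : T_n x ∈ V} ∈ 𝒜_δ (where 𝒜_δ = ⋂_{μ∈M} 𝒜_{δ,μ}). Then the set of 𝒜-universal points for (T_n) is residual in X (in particular, (T_n) admits an 𝒜-universal point). -/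
open Filter Topology
open scoped Classical

/-- Hereditary upward family of subsets of ℕ. -/
def HeredUp (𝒜 : Set (Set ℕ)) : Prop := ∀ A ∈ 𝒜, ∀ B : Set ℕ, A ⊆ B → B ∈ 𝒜

/-- Finitely hereditary upward family: for every member `A` there is a finite set `F`
such that every `B ⊇ A ∩ F` belongs to the family. -/
def FinHeredUp (ℬ : Set (Set ℕ)) : Prop :=
  ∀ A ∈ ℬ, ∃ F : Finset ℕ, ∀ B : Set ℕ, A ∩ ↑F ⊆ B → B ∈ ℬ

/-- `𝒜` is an upper Furstenberg family with representation
`𝒜 = ⋃ δ ⋂ μ Adm δ μ` (where `M` is countable): a proper Furstenberg family,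
each `Adm δ μ` is finitely hereditary upward, and `𝒜` is uniformly left-invariant
(note `A - n = {k | k + n ∈ A}`). -/
structure IsUpperFurstenberg {D M : Type*} (𝒜 : Set (Set ℕ))
    (Adm : D → M → Set (Set ℕ)) : Prop where
  nonempty : 𝒜.Nonempty
  heredUp : HeredUp 𝒜
  proper : ∅ ∉ 𝒜
  countable : Countable M
  repr : 𝒜 = ⋃ δ : D, ⋂ μ : M, Adm δ μ
  finHered : ∀ δ μ, FinHeredUp (Adm δ μ)
  leftInv : ∀ A ∈ 𝒜, ∃ δ : D, ∀ n : ℕ, {k : ℕ | k + n ∈ A} ∈ ⋂ μ : M, Adm δ μ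

/-- A point `x` is `𝒜`-universal for the sequence of maps `T n`. -/
def AUniv {X Y : Type*} [TopologicalSpace X] [TopologicalSpace Y]
    (𝒜 : Set (Set ℕ)) (T : ℕ → X → Y) (x : X) : Prop :=
  ∀ V : Set Y, IsOpen V → V.Nonempty → {n : ℕ | T n x ∈ V} ∈ 𝒜

/-!
Membership in a finitely hereditary upward family is witnessed by finitely many elements, so for
open `V` the set of `x` with `{n | T n x ∈ V} ∈ 𝒜_{δ,μ}` is open. By hypothesis it is dense for a
suitable `δ` and all `μ`. Intersecting over the countably many `μ` and over a countable basis of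
sets `V` gives a residual set of points which, as the family is hereditary upward, are universal.
-/

theorem FinHeredUp.heredUp {ℬ : Set (Set ℕ)} (hℬ : FinHeredUp ℬ) : HeredUp ℬ := by
  intro A hA B hAB
  obtain ⟨F, hF⟩ := hℬ A hA
  exact hF B (Set.inter_subset_left.trans hAB)

theorem HeredUp.iInter {ι : Sort*} {𝒜 : ι → Set (Set ℕ)} (h𝒜 : ∀ i, HeredUp (𝒜 i)) :
    HeredUp (⋂ i, 𝒜 i) := fun A hA B hAB =>
  Set.mem_iInter.2 fun i => h𝒜 i A (Set.mem_iInter.1 hA i) B hAB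

theorem HeredUp.iUnion {ι : Sort*} {𝒜 : ι → Set (Set ℕ)} (h𝒜 : ∀ i, HeredUp (𝒜 i)) :
    HeredUp (⋃ i, 𝒜 i) := by
  intro A hA B hAB
  obtain ⟨i, hAi⟩ := Set.mem_iUnion.1 hA
  exact Set.mem_iUnion.2 ⟨i, h𝒜 i A hAi B hAB⟩

section

variable {X Y : Type*} [TopologicalSpace X] [TopologicalSpace Y]

theorem FinHeredUp.isOpen_setOf {ℬ : Set (Set ℕ)} (hℬ : FinHeredUp ℬ) {W : ℕ → Set X}
    (hW : ∀ n, IsOpen (W n)) : IsOpen {x | {n | x ∈ W n} ∈ ℬ} := by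
  rw [isOpen_iff_eventually]
  intro x hx
  obtain ⟨F, hF⟩ := hℬ _ hx
  have hstay : ∀ᶠ y in 𝓝 x, ∀ n ∈ F, x ∈ W n → y ∈ W n :=
    (eventually_all_finset F).2 fun n _ =>
      eventually_imp_distrib_left.2 fun hxn => (hW n).mem_nhds hxn
  filter_upwards [hstay] with y hy
  exact hF _ fun n ⟨hxn, hnF⟩ => hy n hnF hxn

theorem FinHeredUp.eventually_residual_mem_iInter {M : Type*} [Countable M]
    {ℬ : M → Set (Set ℕ)} (hℬ : ∀ μ, FinHeredUp (ℬ μ)) {W : ℕ → Set X}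
    (hW : ∀ n, IsOpen (W n)) (hdense : ∀ μ, Dense {x | {n | x ∈ W n} ∈ ℬ μ}) :
    ∀ᶠ x in residual X, {n | x ∈ W n} ∈ ⋂ μ, ℬ μ := by
  simp only [Set.mem_iInter]
  exact eventually_countable_forall.2 fun μ =>
    residual_of_dense_open ((hℬ μ).isOpen_setOf hW) (hdense μ)

theorem aUniv_of_isTopologicalBasis {ℰ : Set (Set Y)}
    (hℰ : TopologicalSpace.IsTopologicalBasis ℰ) {𝒜 : Set (Set ℕ)} (h𝒜 : HeredUp 𝒜)
    {T : ℕ → X → Y} {x : X} (hx : ∀ V ∈ ℰ, V.Nonempty → {n | T n x ∈ V} ∈ 𝒜) :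
    AUniv 𝒜 T x := by
  rintro V hV ⟨y, hyV⟩
  obtain ⟨W, hW, hyW, hWV⟩ := hℰ.exists_subset_of_mem_open hyV hV
  exact h𝒜 _ (hx W hW ⟨y, hyW⟩) _ fun _ hn => hWV hn

theorem upperFurstenberg_birkhoff_general [BaireSpace X] [SecondCountableTopology Y]
    {T : ℕ → X → Y} (hT : ∀ n, Continuous (T n)) {D M : Type*} [Countable M]
    {Adm : D → M → Set (Set ℕ)} (hAdm : ∀ δ μ, FinHeredUp (Adm δ μ))
    (hdense : ∀ V : Set Y, IsOpen V → V.Nonempty →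
      ∃ δ, ∀ μ, Dense {x | {n | T n x ∈ V} ∈ Adm δ μ}) :
    {x | AUniv (⋃ δ, ⋂ μ, Adm δ μ) T x} ∈ residual X ∧
      (Nonempty X → ∃ x, AUniv (⋃ δ, ⋂ μ, Adm δ μ) T x) := by
  have hhered : HeredUp (⋃ δ, ⋂ μ, Adm δ μ) :=
    HeredUp.iUnion fun δ => HeredUp.iInter fun μ => (hAdm δ μ).heredUp
  have hbasis : ∀ᶠ x in residual X, ∀ V ∈ TopologicalSpace.countableBasis Y,
      {n | T n x ∈ V} ∈ ⋃ δ, ⋂ μ, Adm δ μ := by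
    refine (eventually_countable_ball (TopologicalSpace.countable_countableBasis Y)).2
      fun V hV => ?_
    have hVo : IsOpen V := TopologicalSpace.isOpen_of_mem_countableBasis hV
    obtain ⟨δ, hδ⟩ := hdense V hVo (TopologicalSpace.nonempty_of_mem_countableBasis hV)
    filter_upwards [FinHeredUp.eventually_residual_mem_iInter (hAdm δ)
      (fun n => hVo.preimage (hT n)) hδ] with x hx
    exact Set.mem_iUnion.2 ⟨δ, hx⟩
  have hresidual : {x | AUniv (⋃ δ, ⋂ μ, Adm δ μ) T x} ∈ residual X := by
    filter_upwards [hbasis] with x hx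
    exact aUniv_of_isTopologicalBasis (TopologicalSpace.isBasis_countableBasis Y) hhered
      fun V hV _ => hx V hV
  exact ⟨hresidual, fun _ => (dense_of_mem_residual hresidual).nonempty⟩

end

/-- Birkhoff-type theorem for upper Furstenberg families (Theorem 3.1, (a) ⇒ (c), (d)):
if for every nonempty open `V ⊆ Y` there is `δ ∈ D` such that every nonempty open `U ⊆ X`
contains a point `x` with `{n | T n x ∈ V} ∈ 𝒜_δ = ⋂ μ, Adm δ μ`, then the set of
`𝒜`-universal points for `(T n)` is residual in `X` (in particular, if `X` is nonempty,
`(T n)` admits an `𝒜`-universal point). -/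
theorem upperFurstenberg_birkhoff {X Y : Type*} [MetricSpace X] [CompleteSpace X]
    [MetricSpace Y] [TopologicalSpace.SeparableSpace Y]
    (T : ℕ → X → Y) (hT : ∀ n, Continuous (T n))
    {D M : Type*} (𝒜 : Set (Set ℕ)) (Adm : D → M → Set (Set ℕ))
    (hA : IsUpperFurstenberg 𝒜 Adm)
    (hyp : ∀ V : Set Y, IsOpen V → V.Nonempty → ∃ δ : D,
      ∀ U : Set X, IsOpen U → U.Nonempty → ∃ x ∈ U,
        {n : ℕ | T n x ∈ V} ∈ ⋂ μ : M, Adm δ μ) :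
    {x : X | AUniv 𝒜 T x} ∈ residual X ∧ (Nonempty X → ∃ x, AUniv 𝒜 T x) := by
  have := hA.countable
  have := UniformSpace.secondCountable_of_separable Y
  obtain rfl := hA.repr
  refine upperFurstenberg_birkhoff_general hT hA.finHered fun V hVo hVn => ?_
  obtain ⟨δ, hδ⟩ := hyp V hVo hVn
  have hdense : Dense {x | {n | T n x ∈ V} ∈ ⋂ μ, Adm δ μ} := dense_iff_inter_open.2 hδ
  exact ⟨δ, fun μ => hdense.mono fun _ hx => Set.iInter_subset (Adm δ) μ hx⟩
end

section
/- Let T be an invertible map (a homeomorphism) on a complete metric space X. If T is reiteratively hypercyclic then so is T^{-1}. -/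
open Filter Topology
open scoped Classical

/-- Upper density of a set of natural numbers. -/
noncomputable def upperDensity (A : Set ℕ) : ℝ :=
  Filter.limsup
    (fun N : ℕ => (((Finset.range (N + 1)).filter (fun n => n ∈ A)).card : ℝ) / ((N : ℝ) + 1))
    Filter.atTop

/-- Lower density of a set of natural numbers. -/
noncomputable def lowerDensity (A : Set ℕ) : ℝ :=
  Filter.liminf
    (fun N : ℕ => (((Finset.range (N + 1)).filter (fun n => n ∈ A)).card : ℝ) / ((N : ℝ) + 1))
    Filter.atTop

/-- Upper Banach density of a set of natural numbers. -/
noncomputable def upperBanachDensity (A : Set ℕ) : ℝ :=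
  ⨅ N : ℕ, ⨆ m : ℕ, (((Finset.Icc m (m + N)).filter (fun n => n ∈ A)).card : ℝ) / ((N : ℝ) + 1)

/-!
If the orbit of `x` under `T` meets `U` in a proportion larger than `c` of some window of length
`N + 1`, then, reading the orbit backwards from a far later time `M`, the orbit of `T^[M] x` under
the inverse `S` meets `U` in the same proportion of some window. Since the points `T^[M] x` with `M`
large are dense, so is the open set of points `z` whose `S`-orbit has this property, with `c`
independent of `N`. Letting `N` run over `ℕ` and `U` over a countable π-base gives a countable
intersection of dense open sets, all of whose points work for `S`.
-/

open Function TopologicalSpace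

section Density

/-- The number of elements of `A` in the window `[m, m + N]`, the numerator in
`upperBanachDensity`. -/
noncomputable def windowCount (A : Set ℕ) (m N : ℕ) : ℕ :=
  ((Finset.Icc m (m + N)).filter (fun n => n ∈ A)).card

variable {A B : Set ℕ} {m N : ℕ}

theorem windowCount_mono (h : A ⊆ B) : windowCount A m N ≤ windowCount B m N :=
  Finset.card_le_card (Finset.monotone_filter_right _ fun _ _ hn => h hn)

theorem windowCount_le_add_one : windowCount A m N ≤ N + 1 :=
  (Finset.card_filter_le _ _).trans_eq (by rw [Nat.card_Icc]; omega)

theorem windowCount_le_ncard (hA : A.Finite) : windowCount A m N ≤ A.ncard := by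
  rw [windowCount, ← Set.ncard_coe_finset]
  exact Set.ncard_le_ncard (fun n hn => (Finset.mem_filter.1 hn).2) hA

theorem windowCount_le_windowCount_reflect {M : ℕ} (hM : m + N ≤ M)
    (h : ∀ n ≤ M, n ∈ A → M - n ∈ B) :
    windowCount A m N ≤ windowCount B (M - (m + N)) N := by
  refine Finset.card_le_card_of_injOn (fun n => M - n) (fun n hn => ?_) fun n hn k hk hnk => ?_
  · obtain ⟨hn, hnA⟩ := Finset.mem_filter.1 hn
    rw [Finset.mem_Icc] at hn
    exact Finset.mem_filter.2 ⟨Finset.mem_Icc.2 (by dsimp only; omega), h n (by omega) hnA⟩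
  · have hn := Finset.mem_Icc.1 (Finset.mem_filter.1 hn).1
    have hk := Finset.mem_Icc.1 (Finset.mem_filter.1 hk).1
    simp only at hnk
    omega

theorem upperBanachDensity_pos_iff :
    0 < upperBanachDensity A ↔
      ∃ c : ℝ, 0 < c ∧ ∀ N : ℕ, ∃ m : ℕ, c * (N + 1) < windowCount A m N := by
  have length_pos (N : ℕ) : (0 : ℝ) < N + 1 := by positivity
  constructor
  · intro h
    obtain ⟨c, hc, hcA⟩ := exists_between h
    refine ⟨c, hc, fun N => ?_⟩
    have bddBelow : BddBelow (Set.range fun N : ℕ =>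
        ⨆ m : ℕ, (windowCount A m N : ℝ) / ((N : ℝ) + 1)) :=
      ⟨0, Set.forall_mem_range.2 fun N => Real.iSup_nonneg fun m => by positivity⟩
    obtain ⟨m, hm⟩ := exists_lt_of_lt_ciSup (hcA.trans_le (ciInf_le bddBelow N))
    exact ⟨m, (lt_div_iff₀ (length_pos N)).1 hm⟩
  · rintro ⟨c, hc, hcA⟩
    refine hc.trans_le (le_ciInf fun N => ?_)
    have bddAbove : BddAbove (Set.range fun m : ℕ =>
        (windowCount A m N : ℝ) / ((N : ℝ) + 1)) :=
      ⟨1, Set.forall_mem_range.2 fun m =>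
        (div_le_one (length_pos N)).2 (mod_cast windowCount_le_add_one)⟩
    obtain ⟨m, hm⟩ := hcA N
    exact ((le_div_iff₀ (length_pos N)).2 hm.le).trans (le_ciSup bddAbove m)

theorem upperBanachDensity_pos_mono (h : A ⊆ B) (hA : 0 < upperBanachDensity A) :
    0 < upperBanachDensity B := by
  rw [upperBanachDensity_pos_iff] at hA ⊢
  obtain ⟨c, hc, hcA⟩ := hA
  exact ⟨c, hc, fun N => (hcA N).imp fun m hm => hm.trans_le (mod_cast windowCount_mono h)⟩

theorem infinite_of_upperBanachDensity_pos (hA : 0 < upperBanachDensity A) : A.Infinite := by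
  intro hfin
  obtain ⟨c, hc, hcA⟩ := upperBanachDensity_pos_iff.1 hA
  obtain ⟨N, hN⟩ := exists_nat_gt ((A.ncard : ℝ) / c)
  obtain ⟨m, hm⟩ := hcA N
  have hcount : (windowCount A m N : ℝ) ≤ A.ncard := mod_cast windowCount_le_ncard hfin
  rw [div_lt_iff₀ hc] at hN
  linarith

end Density

section PiBase

variable {X : Type*} [TopologicalSpace X]

/-- A π-base of `X`: a family of nonempty open sets such that every nonempty open set contains a
member of the family. It replaces a topological basis here, since a separable first-countable space
has a countable π-base but need not be second countable. -/
def IsPiBase (B : Set (Set X)) : Prop :=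
  (∀ U ∈ B, IsOpen U ∧ U.Nonempty) ∧ ∀ V, IsOpen V → V.Nonempty → ∃ U ∈ B, U ⊆ V

theorem exists_countable_isPiBase (X : Type*) [TopologicalSpace X] [SeparableSpace X]
    [FirstCountableTopology X] : ∃ B : Set (Set X), B.Countable ∧ IsPiBase B := by
  obtain ⟨s, hsc, hsd⟩ := exists_countable_dense X
  choose b hb using fun x : X => (𝓝 x).exists_antitone_basis
  refine ⟨⋃ x ∈ s, Set.range fun n => interior (b x n),
    hsc.biUnion fun x _ => Set.countable_range _, ?_, fun V hV hne => ?_⟩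
  · simp only [Set.mem_iUnion₂, Set.mem_range]
    rintro _ ⟨x, -, n, rfl⟩
    exact ⟨isOpen_interior, x, mem_interior_iff_mem_nhds.2 ((hb x).mem n)⟩
  · obtain ⟨x, hxV, hxs⟩ := hsd.inter_open_nonempty V hV hne
    obtain ⟨n, hn⟩ := (hb x).mem_iff.1 (hV.mem_nhds hxV)
    exact ⟨_, Set.mem_biUnion hxs ⟨n, rfl⟩, interior_subset.trans hn⟩

end PiBase

section Visits

variable {X : Type*}

theorem iterate_sub_apply_iterate_of_leftInverse {S T : X → X} (hST : LeftInverse S T) {n M : ℕ}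
    (h : n ≤ M) (x : X) : S^[M - n] (T^[M] x) = T^[n] x := by
  obtain ⟨k, rfl⟩ := Nat.exists_eq_add_of_le' h
  rw [Nat.add_sub_cancel, iterate_add_apply]
  exact hST.iterate k _

theorem windowCount_visits_le_of_leftInverse {S T : X → X} (hST : LeftInverse S T) (x : X)
    (U : Set X) {m N M : ℕ} (hM : m + N ≤ M) :
    windowCount {n | T^[n] x ∈ U} m N ≤
      windowCount {n | S^[n] (T^[M] x) ∈ U} (M - (m + N)) N :=
  windowCount_le_windowCount_reflect hM fun n hn hnU => by
    rwa [Set.mem_ofPred_eq, iterate_sub_apply_iterate_of_leftInverse hST hn]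

variable [TopologicalSpace X]

theorem lowerSemicontinuous_windowCount_visits {Y : Type*} [TopologicalSpace Y] {f : ℕ → X → Y}
    (hf : ∀ n, Continuous (f n)) {U : Set Y} (hU : IsOpen U) (m N : ℕ) :
    LowerSemicontinuous fun z => (windowCount {n | f n z ∈ U} m N : ℝ) := by
  intro z r hr
  have visits_persist : ∀ᶠ y in 𝓝 z,
      ∀ n ∈ (Finset.Icc m (m + N)).filter (fun n => f n z ∈ U), f n y ∈ U :=
    (Filter.eventually_all_finset _).2 fun n hn =>
      (hf n).continuousAt.eventually (hU.mem_nhds (Finset.mem_filter.1 hn).2)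
  filter_upwards [visits_persist] with y hy
  refine hr.trans_le (Nat.cast_le.2 (Finset.card_le_card fun n hn => ?_))
  exact Finset.mem_filter.2 ⟨(Finset.mem_filter.1 hn).1, hy n hn⟩

theorem dense_setOfPred_exists_lt_windowCount {S T : X → X} (hST : LeftInverse S T) {x : X}
    (hx : ∀ V : Set X, IsOpen V → V.Nonempty → {n | T^[n] x ∈ V}.Infinite) {U : Set X} {r : ℝ}
    {m N : ℕ} (hr : r < windowCount {n | T^[n] x ∈ U} m N) :
    Dense {z | ∃ k, r < windowCount {n | S^[n] z ∈ U} k N} := by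
  refine dense_iff_inter_open.2 fun V hV hne => ?_
  obtain ⟨M, hMV, hM⟩ := (hx V hV hne).exists_gt (m + N)
  exact ⟨T^[M] x, hMV, M - (m + N),
    hr.trans_le (mod_cast windowCount_visits_le_of_leftInverse hST x U hM.le)⟩

end Visits

section ReiterativelyHypercyclic

variable {X : Type*} [TopologicalSpace X]

/-- `x` is a reiteratively hypercyclic point of `T`: its orbit visits every nonempty open set along
a set of times of positive upper Banach density. A map is reiteratively hypercyclic when it has such
a point. -/
def IsReiterativelyHypercyclicPoint (T : X → X) (x : X) : Prop :=
  ∀ U : Set X, IsOpen U → U.Nonempty → 0 < upperBanachDensity {n | T^[n] x ∈ U}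

namespace IsReiterativelyHypercyclicPoint

variable {S T : X → X} {x : X}

theorem infinite_visits (hx : IsReiterativelyHypercyclicPoint T x) (U : Set X) (hU : IsOpen U)
    (hne : U.Nonempty) : {n | T^[n] x ∈ U}.Infinite :=
  infinite_of_upperBanachDensity_pos (hx U hU hne)

theorem separableSpace (hx : IsReiterativelyHypercyclicPoint T x) : SeparableSpace X := by
  refine ⟨_, Set.countable_range fun n => T^[n] x, dense_iff_inter_open.2 fun U hU hne => ?_⟩
  obtain ⟨n, hn⟩ := (hx.infinite_visits U hU hne).nonempty
  exact ⟨_, hn, n, rfl⟩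

theorem of_isPiBase {B : Set (Set X)} (hB : IsPiBase B)
    (hx : ∀ U ∈ B, 0 < upperBanachDensity {n | T^[n] x ∈ U}) :
    IsReiterativelyHypercyclicPoint T x := by
  intro V hV hne
  obtain ⟨U, hUB, hUV⟩ := hB.2 V hV hne
  exact upperBanachDensity_pos_mono (fun n hn => hUV hn) (hx U hUB)

theorem eventually_residual_upperBanachDensity_pos (hx : IsReiterativelyHypercyclicPoint T x)
    (hS : Continuous S) (hST : LeftInverse S T) {U : Set X} (hU : IsOpen U) (hne : U.Nonempty) :
    ∀ᶠ z in residual X, 0 < upperBanachDensity {n | S^[n] z ∈ U} := by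
  obtain ⟨c, hc, hcU⟩ := upperBanachDensity_pos_iff.1 (hx U hU hne)
  have window_of_length (N : ℕ) :
      ∀ᶠ z in residual X, ∃ m, c * (N + 1) < windowCount {n | S^[n] z ∈ U} m N := by
    obtain ⟨m, hm⟩ := hcU N
    refine residual_of_dense_open ?_
      (dense_setOfPred_exists_lt_windowCount hST hx.infinite_visits hm)
    rw [Set.ofPred_exists]
    exact isOpen_iUnion fun k =>
      (lowerSemicontinuous_windowCount_visits hS.iterate hU k N).isOpen_preimage _
  filter_upwards [eventually_countable_forall.2 window_of_length] with z hz
  exact upperBanachDensity_pos_iff.2 ⟨c, hc, hz⟩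

end IsReiterativelyHypercyclicPoint

theorem reiterativelyHypercyclic_inverse_general [FirstCountableTopology X] {S T : X → X}
    (hS : Continuous S) (hST : LeftInverse S T)
    (h : ∃ x, IsReiterativelyHypercyclicPoint T x) :
    ∀ᶠ z in residual X, IsReiterativelyHypercyclicPoint S z := by
  obtain ⟨x, hx⟩ := h
  have := hx.separableSpace
  obtain ⟨B, hBc, hB⟩ := exists_countable_isPiBase X
  have visits_base : ∀ᶠ z in residual X, ∀ U ∈ B, 0 < upperBanachDensity {n | S^[n] z ∈ U} :=
    (eventually_countable_ball hBc).2 fun U hU =>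
      hx.eventually_residual_upperBanachDensity_pos hS hST (hB.1 U hU).1 (hB.1 U hU).2
  exact visits_base.mono fun z hz => .of_isPiBase hB hz

end ReiterativelyHypercyclic

/-- The inverse of an invertible reiteratively hypercyclic map on a complete metric space
is reiteratively hypercyclic. -/
theorem reiterativelyHypercyclic_inverse {X : Type*} [MetricSpace X] [CompleteSpace X]
    (T : X ≃ₜ X)
    (h : ∃ x, ∀ U : Set X, IsOpen U → U.Nonempty →
      0 < upperBanachDensity {n : ℕ | (⇑T)^[n] x ∈ U}) :
    ∃ x, ∀ U : Set X, IsOpen U → U.Nonempty →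
      0 < upperBanachDensity {n : ℕ | (⇑T.symm)^[n] x ∈ U} := by
  have : Nonempty X := h.nonempty
  exact (dense_of_mem_residual
    (reiterativelyHypercyclic_inverse_general T.symm.continuous T.left_inv h)).nonempty
end

section
/- Let T be an invertible map (a homeomorphism) on a complete metric space X. If T is frequently hypercyclic then T^{-1} is upper frequently hypercyclic. -/
open Filter Topology
open scoped Classical

/-!
If `T^[m] x` is a late term of an orbit under `T`, then the first `m + 1` points of its orbit under
an inverse `S` of `T` are `x, T x, …, T^[m] x` in reverse order. So when `x` is a frequently
hypercyclic point, its late iterates, which are dense, spend a proportion of their first steps under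
`S` in `U` that is bounded below. This is an open condition on the starting point, so
imposing it at infinitely many times, for all `U` in a countable basis, leaves a residual set.
-/

section Density

/-- The proportion of elements of `A` in `[0, N]`, whose limits inferior and superior as `N → ∞` are
the lower and upper densities of `A`. -/
noncomputable def initialDensity (A : Set ℕ) (N : ℕ) : ℝ :=
  (((Finset.range (N + 1)).filter (fun n => n ∈ A)).card : ℝ) / ((N : ℝ) + 1)

variable {A B : Set ℕ} {δ : ℝ}

lemma initialDensity_nonneg (A : Set ℕ) (N : ℕ) : 0 ≤ initialDensity A N := by
  unfold initialDensity
  positivity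

lemma initialDensity_le_one (A : Set ℕ) (N : ℕ) : initialDensity A N ≤ 1 := by
  refine div_le_one_of_le₀ ?_ (by positivity)
  exact_mod_cast (Finset.card_filter_le _ _).trans_eq (Finset.card_range (N + 1))

lemma initialDensity_mono (hAB : A ⊆ B) (N : ℕ) : initialDensity A N ≤ initialDensity B N := by
  unfold initialDensity
  gcongr

lemma initialDensity_eq_sum (A : Set ℕ) (N : ℕ) :
    initialDensity A N = ∑ n ∈ Finset.range (N + 1), A.indicator (fun _ => ((N : ℝ) + 1)⁻¹) n := by
  simp only [initialDensity, Finset.card_filter, Nat.cast_sum, Nat.cast_ite, Nat.cast_one,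
    Nat.cast_zero, Finset.sum_div, Set.indicator_apply, ite_div, one_div, zero_div]

lemma initialDensity_eq_of_reflect {N : ℕ} (hAB : ∀ n ≤ N, N - n ∈ A ↔ n ∈ B) :
    initialDensity A N = initialDensity B N := by
  rw [initialDensity_eq_sum, initialDensity_eq_sum, ← Finset.sum_range_reflect]
  refine Finset.sum_congr rfl fun n hn => ?_
  simp only [Set.indicator_apply, Nat.add_sub_cancel, hAB n (Finset.mem_range_succ_iff.1 hn)]

lemma tendsto_initialDensity_zero_of_finite (hA : A.Finite) :
    Tendsto (initialDensity A) atTop (𝓝 0) := by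
  refine squeeze_zero (initialDensity_nonneg A) (g := fun N : ℕ => (A.ncard : ℝ) / ((N : ℝ) + 1))
    (fun N => ?_) ?_
  · unfold initialDensity
    gcongr
    rw [← Set.ncard_coe_finset]
    exact Set.ncard_le_ncard (fun n hn => (Finset.mem_filter.1 hn).2) hA
  · exact tendsto_const_nhds.div_atTop
      (tendsto_atTop_add_const_right _ _ tendsto_natCast_atTop_atTop)

lemma infinite_of_lowerDensity_pos (hA : 0 < lowerDensity A) : A.Infinite := fun hfin =>
  hA.ne' (tendsto_initialDensity_zero_of_finite hfin).liminf_eq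

lemma eventually_lt_initialDensity (hδ : δ < lowerDensity A) :
    ∀ᶠ N in atTop, δ < initialDensity A N :=
  eventually_lt_of_lt_liminf hδ (isBoundedUnder_of ⟨0, initialDensity_nonneg A⟩)

lemma isBoundedUnder_le_initialDensity (A : Set ℕ) :
    IsBoundedUnder (· ≤ ·) atTop (initialDensity A) :=
  isBoundedUnder_of ⟨1, initialDensity_le_one A⟩

lemma le_upperDensity_of_frequently_lt (hδ : ∃ᶠ N in atTop, δ < initialDensity A N) :
    δ ≤ upperDensity A :=
  le_limsup_of_frequently_le (hδ.mono fun _ => le_of_lt) (isBoundedUnder_le_initialDensity A)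

lemma upperDensity_mono (hAB : A ⊆ B) : upperDensity A ≤ upperDensity B :=
  limsup_le_limsup (.of_forall (initialDensity_mono hAB))
    (isBoundedUnder_of ⟨0, initialDensity_nonneg A⟩).isCoboundedUnder_le
    (isBoundedUnder_le_initialDensity B)

end Density

lemma eventually_residual_frequently_atTop {X : Type*} [TopologicalSpace X] {p : ℕ → X → Prop}
    (hopen : ∀ N, IsOpen {y | p N y})
    (hdense : ∀ V : Set X, IsOpen V → V.Nonempty → ∃ᶠ N in atTop, ∃ y ∈ V, p N y) :
    ∀ᶠ y in residual X, ∃ᶠ N in atTop, p N y := by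
  simp only [frequently_atTop]
  refine eventually_countable_forall.2 fun n => residual_of_dense_open ?_ ?_
  · simp only [Set.ofPred_exists, Set.ofPred_and]
    exact isOpen_iUnion fun N => isOpen_const.inter (hopen N)
  · refine dense_iff_inter_open.2 fun V hV hne => ?_
    obtain ⟨N, hN, y, hyV, hy⟩ := frequently_atTop.1 (hdense V hV hne) n
    exact ⟨y, hyV, N, hN, hy⟩

lemma iterate_leftInverse_iterate {α : Type*} {S T : α → α} (hST : Function.LeftInverse S T)
    {m n : ℕ} (hnm : n ≤ m) (x : α) : S^[n] (T^[m] x) = T^[m - n] x := by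
  rw [← Nat.add_sub_cancel' hnm, Function.iterate_add_apply, hST.iterate n, Nat.add_sub_cancel_left]

section Orbits

variable {X : Type*} {S T : X → X} {x : X} {U : Set X}

/-- The set of times at which the orbit of `x` under `f` is in `U`. -/
def visitTimes (f : X → X) (x : X) (U : Set X) : Set ℕ := {n | f^[n] x ∈ U}

lemma visitTimes_mono {U V : Set X} (hUV : U ⊆ V) (f : X → X) (x : X) :
    visitTimes f x U ⊆ visitTimes f x V := fun _ hn => hUV hn

lemma initialDensity_visitTimes_iterate (hST : Function.LeftInverse S T) (m : ℕ) (x : X)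
    (U : Set X) :
    initialDensity (visitTimes S (T^[m] x) U) m = initialDensity (visitTimes T x U) m := by
  refine (initialDensity_eq_of_reflect fun n hn => ?_).symm
  simp only [visitTimes, Set.mem_ofPred_eq, iterate_leftInverse_iterate hST hn]

variable [TopologicalSpace X]

/-- A point whose visits to every nonempty open set have positive lower density; `f` is frequently
hypercyclic when it has such a point. -/
def IsFrequentlyHypercyclicPoint (f : X → X) (x : X) : Prop :=
  ∀ U : Set X, IsOpen U → U.Nonempty → 0 < lowerDensity (visitTimes f x U)

/-- A point whose visits to every nonempty open set have positive upper density; `f` is upper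
frequently hypercyclic when it has such a point. -/
def IsUpperFrequentlyHypercyclicPoint (f : X → X) (x : X) : Prop :=
  ∀ U : Set X, IsOpen U → U.Nonempty → 0 < upperDensity (visitTimes f x U)

lemma IsFrequentlyHypercyclicPoint.denseRange_iterate (hx : IsFrequentlyHypercyclicPoint T x) :
    DenseRange fun n : ℕ => T^[n] x := by
  refine dense_iff_inter_open.2 fun U hU hne => ?_
  obtain ⟨n, hn⟩ := (infinite_of_lowerDensity_pos (hx U hU hne)).nonempty
  exact ⟨_, hn, n, rfl⟩

lemma lowerSemicontinuous_initialDensity_visitTimes (hS : Continuous S) (hU : IsOpen U) (N : ℕ) :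
    LowerSemicontinuous fun y => initialDensity (visitTimes S y U) N := by
  simp only [initialDensity_eq_sum]
  exact lowerSemicontinuous_sum fun n _ =>
    (hU.preimage (hS.iterate n)).lowerSemicontinuous_indicator (by positivity)

lemma eventually_residual_le_upperDensity (hS : Continuous S) (hST : Function.LeftInverse S T)
    (hx : ∀ V : Set X, IsOpen V → V.Nonempty → (visitTimes T x V).Infinite) (hU : IsOpen U)
    {δ : ℝ} (hδ : δ < lowerDensity (visitTimes T x U)) :
    ∀ᶠ y in residual X, δ ≤ upperDensity (visitTimes S y U) := by
  suffices hfreq : ∀ᶠ y in residual X, ∃ᶠ N in atTop, δ < initialDensity (visitTimes S y U) N from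
    hfreq.mono fun _ => le_upperDensity_of_frequently_lt
  refine eventually_residual_frequently_atTop (fun N =>
    (lowerSemicontinuous_initialDensity_visitTimes hS hU N).isOpen_preimage δ) fun V hV hne => ?_
  have hvisit : ∃ᶠ m in atTop, T^[m] x ∈ V := Nat.frequently_atTop_iff_infinite.2 (hx V hV hne)
  refine (hvisit.and_eventually (eventually_lt_initialDensity hδ)).mono fun m hm => ?_
  exact ⟨T^[m] x, hm.1, by rw [initialDensity_visitTimes_iterate hST]; exact hm.2⟩

lemma IsFrequentlyHypercyclicPoint.eventually_residual_of_leftInverse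
    [SecondCountableTopology X] (hx : IsFrequentlyHypercyclicPoint T x) (hS : Continuous S)
    (hST : Function.LeftInverse S T) :
    ∀ᶠ y in residual X, IsUpperFrequentlyHypercyclicPoint S y := by
  have hbasic : ∀ B ∈ TopologicalSpace.countableBasis X,
      ∀ᶠ y in residual X, 0 < upperDensity (visitTimes S y B) := fun B hB => by
    have hBo := TopologicalSpace.isOpen_of_mem_countableBasis hB
    obtain ⟨δ, hδ, hδx⟩ :=
      exists_between (hx B hBo (TopologicalSpace.nonempty_of_mem_countableBasis hB))
    exact (eventually_residual_le_upperDensity hS hST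
      (fun V hV hne => infinite_of_lowerDensity_pos (hx V hV hne)) hBo hδx).mono
        fun _ => hδ.trans_le
  filter_upwards [(eventually_countable_ball
    (TopologicalSpace.countable_countableBasis X)).2 hbasic] with y hy U hU ⟨u, hu⟩
  obtain ⟨B, hB, -, hBU⟩ :=
    (TopologicalSpace.isBasis_countableBasis X).exists_subset_of_mem_open hu hU
  exact (hy B hB).trans_le (upperDensity_mono (visitTimes_mono hBU S y))

end Orbits

theorem frequentlyHypercyclic_inverse_upperFrequent_general {X : Type*} [TopologicalSpace X]
    [TopologicalSpace.PseudoMetrizableSpace X] {S T : X → X} (hS : Continuous S)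
    (hST : Function.LeftInverse S T) (h : ∃ x, IsFrequentlyHypercyclicPoint T x) :
    ∀ᶠ y in residual X, IsUpperFrequentlyHypercyclicPoint S y := by
  obtain ⟨x, hx⟩ := h
  have : TopologicalSpace.SeparableSpace X :=
    ⟨_, Set.countable_range _, hx.denseRange_iterate⟩
  let := TopologicalSpace.pseudoMetrizableSpacePseudoMetric X
  have : SecondCountableTopology X := UniformSpace.secondCountable_of_separable X
  exact hx.eventually_residual_of_leftInverse hS hST

/-- If an invertible map on a complete metric space is frequently hypercyclic, then its
inverse is upper frequently hypercyclic. -/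
theorem frequentlyHypercyclic_inverse_upperFrequent {X : Type*} [MetricSpace X]
    [CompleteSpace X] (T : X ≃ₜ X)
    (h : ∃ x, ∀ U : Set X, IsOpen U → U.Nonempty →
      0 < lowerDensity {n : ℕ | (⇑T)^[n] x ∈ U}) :
    ∃ x, ∀ U : Set X, IsOpen U → U.Nonempty →
      0 < upperDensity {n : ℕ | (⇑T.symm)^[n] x ∈ U} := by
  have : Nonempty X := h.nonempty
  exact (dense_of_mem_residual (frequentlyHypercyclic_inverse_upperFrequent_general
    T.symm.continuous T.symm_apply_apply h)).nonempty
end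

section
/- Let w = (w_n)_{n≥1} be a bounded sequence of nonzero scalars and 𝒜 a finitely invariant Furstenberg family. Then the weighted backward shift B_w is 𝒜-hypercyclic on c₀ if and only if there exist a sequence (M_p)_{p≥1} of positive numbers with M_p → ∞ and a sequence (A_p)_{p≥1} of pairwise disjoint sets in 𝒜 such that (i) for any p ≥ 1, |w_1 w_2 ⋯ w_{n+p}| → ∞ as n → ∞ along n ∈ A_p, and (ii) for any n ∈ A_p and m ∈ A_q with p ≤ q and n ≠ m, |w_1 w_2 ⋯ w_{|n−m|+j}| > M_q, where j ranges over 0, …, p if n > m and over 0, …, q if n < m. -/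
open Filter Topology
open scoped Classical ZeroAtInfty


/-- A Furstenberg family (nonempty and hereditary upward). -/
def FurstenbergFamily (𝒜 : Set (Set ℕ)) : Prop :=
  𝒜.Nonempty ∧ ∀ A ∈ 𝒜, ∀ B : Set ℕ, A ⊆ B → B ∈ 𝒜

/-- A family of subsets of ℕ is finitely invariant (f.i.) if `A ∈ 𝒜` implies
`A \ [0,n] ∈ 𝒜` for all `n`. -/
def FinInvariant (𝒜 : Set (Set ℕ)) : Prop :=
  ∀ A ∈ 𝒜, ∀ n : ℕ, (A \ Set.Iic n) ∈ 𝒜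

/-!
In the coordinates `y i = w₁ ⋯ wᵢ * x i` the operator `B_w` becomes the unweighted shift: the
`k`-th coordinate of `B_wⁿ x` is `y (n + k) / (w₁ ⋯ w_k)`.

If `x` is hypercyclic, let `A p` be the set of times at which the orbit is close to a vector
supported on `[0, p]` whose coordinates (rescaled by `w₁ ⋯ w_k`) are large and separated from each
other over all `p` and `k`. At a time `n ∈ A p` the values of `y` on the block `n + [0, p]` identify
`p` and `k`, so distinct blocks are disjoint; hence, for `n ∈ A p` and `m ∈ A q` with `n < m`, the
block of `m` lies in the region where closeness at time `n` forces `y (n + i)` to be small compared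
with `w₁ ⋯ wᵢ`. Since `y` is large on the block of `m`, the product `w₁ ⋯ w_{m - n + j}` is large.

Conversely, after thinning out the sets `A p`, the blocks `n + [0, p]` with `n ∈ A p` are disjoint,
and one writes on each of them the `p`-th member of a dense sequence of finitely supported vectors.
-/

section ZeroAtInfty

theorem exists_zeroAtInfty_coe_eq {E : Type*} [TopologicalSpace E] [Zero E] {f : ℕ → E}
    (hf : Tendsto f atTop (𝓝 0)) : ∃ x : C₀(ℕ, E), ⇑x = f :=
  ⟨⟨⟨f, continuous_of_discreteTopology⟩, by
    rwa [cocompact_eq_cofinite, Nat.cofinite_eq_atTop]⟩, rfl⟩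

theorem zeroAtInfty_tendsto_atTop {E : Type*} [TopologicalSpace E] [Zero E] (x : C₀(ℕ, E)) :
    Tendsto x atTop (𝓝 0) := by
  rw [← Nat.cofinite_eq_atTop, ← cocompact_eq_cofinite]
  exact x.zero_at_infty'

variable {X E : Type*} [TopologicalSpace X] [PseudoMetricSpace E] [Zero E]

theorem zeroAtInfty_dist_apply_le (x y : C₀(X, E)) (a : X) : dist (x a) (y a) ≤ dist x y :=
  BoundedContinuousFunction.dist_coe_le_dist (f := x.toBCF) (g := y.toBCF) a

theorem zeroAtInfty_dist_le {x y : C₀(X, E)} {r : ℝ} (hr : 0 ≤ r)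
    (h : ∀ a, dist (x a) (y a) ≤ r) : dist x y ≤ r :=
  (BoundedContinuousFunction.dist_le (f := x.toBCF) (g := y.toBCF) hr).2 h

variable [TopologicalSpace.SeparableSpace E]

open TopologicalSpace in
theorem exists_list_dist_getD_denseSeq_le (x : C₀(ℕ, E)) {ε : ℝ} (hε : 0 < ε) :
    ∃ a : List ℕ, ∀ k, dist ((a.map (denseSeq E)).getD k 0) (x k) ≤ ε := by
  choose g hg using fun k => (denseRange_denseSeq E).exists_dist_lt (x k) hε
  obtain ⟨N, hN⟩ := Metric.tendsto_atTop.1 (zeroAtInfty_tendsto_atTop x) ε hε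
  refine ⟨(List.range N).map g, fun k => ?_⟩
  rcases lt_or_ge k N with hk | hk
  · simpa [hk, dist_comm] using (hg k).le
  · simpa [hk, dist_comm] using (hN k hk).le

open TopologicalSpace in
theorem exists_seq_zeroAtInfty_forall_mapClusterPt :
    ∃ v : ℕ → C₀(ℕ, E), (∀ s k, s < k → v s k = 0) ∧ ∀ x, MapClusterPt x atTop v := by
  -- Decoding only the first component of `s` makes every list occur infinitely often.
  let l : ℕ → List E := fun s => (Denumerable.ofNat (List ℕ) s.unpair.1).map (denseSeq E)
  have length_le : ∀ s, (l s).length ≤ s := fun s => by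
    have h := Encodable.length_le_encode (Denumerable.ofNat (List ℕ) s.unpair.1)
    rw [Denumerable.encode_ofNat] at h
    simpa only [l, List.length_map] using h.trans s.unpair_left_le
  have eq_zero : ∀ s k, s < k → (l s).getD k 0 = 0 := fun s k hk =>
    List.getD_eq_default _ _ ((length_le s).trans hk.le)
  choose v hv using fun s => exists_zeroAtInfty_coe_eq
    (tendsto_const_nhds.congr' ((eventually_gt_atTop s).mono fun k hk => (eq_zero s k hk).symm))
  refine ⟨v, fun s k hk => (congrFun (hv s) k).trans (eq_zero s k hk), fun x => ?_⟩
  refine (Metric.nhds_basis_closedBall.mapClusterPt_iff_frequently).2 fun ε hε => ?_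
  obtain ⟨a, ha⟩ := exists_list_dist_getD_denseSeq_le x hε
  refine frequently_atTop.2 fun S => ⟨Nat.pair (Encodable.encode a) S, Nat.right_le_pair _ _, ?_⟩
  refine zeroAtInfty_dist_le hε.le fun k => ?_
  simpa only [hv, l, Nat.unpair_pair, Denumerable.ofNat_encode] using ha k

end ZeroAtInfty

section Hypercyclic

/-- `x` is an `𝒜`-hypercyclic vector for `T`: its orbit visits every nonempty open set along a set
of times belonging to `𝒜`. -/
def IsHypercyclicVectorFor {X : Type*} [TopologicalSpace X] (𝒜 : Set (Set ℕ)) (T : X → X)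
    (x : X) : Prop :=
  ∀ V : Set X, IsOpen V → V.Nonempty → {n : ℕ | T^[n] x ∈ V} ∈ 𝒜

theorem isHypercyclicVectorFor_of_dist_le {X : Type*} [PseudoMetricSpace X] {𝒜 : Set (Set ℕ)}
    (h𝒜 : FurstenbergFamily 𝒜) {T : X → X} {x : X} {v : ℕ → X}
    (hv : ∀ z, MapClusterPt z atTop v) {D : ℕ → Set ℕ} (hD : ∀ s, D s ∈ 𝒜) {ε : ℕ → ℝ}
    (hε : Tendsto ε atTop (𝓝 0)) (h : ∀ s, ∀ n ∈ D s, dist (T^[n] x) (v s) ≤ ε s) :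
    IsHypercyclicVectorFor 𝒜 T x := by
  rintro V hV ⟨z, hz⟩
  obtain ⟨δ, hδ, hball⟩ := Metric.isOpen_iff.1 hV z hz
  obtain ⟨s, hvs, hεs⟩ := (((hv z).frequently (Metric.ball_mem_nhds z (half_pos hδ))).and_eventually
    (hε.eventually_lt_const (half_pos hδ))).exists
  refine h𝒜.2 (D s) (hD s) _ fun n hn => hball ?_
  calc dist (T^[n] x) z ≤ dist (T^[n] x) (v s) + dist (v s) z := dist_triangle _ _ _
    _ < δ / 2 + δ / 2 := add_lt_add ((h s n hn).trans_lt hεs) hvs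
    _ = δ := add_halves δ

end Hypercyclic

section WeightProd

/-- The weight product `w₁ w₂ ⋯ wₙ`. Weights are indexed from `1`, so `weightProd w 0 = 1`. -/
def weightProd {R : Type*} [CommMonoid R] (w : ℕ → R) (n : ℕ) : R := ∏ ν ∈ Finset.Icc 1 n, w ν

theorem weightProd_succ {R : Type*} [CommMonoid R] (w : ℕ → R) (n : ℕ) :
    weightProd w (n + 1) = weightProd w n * w (n + 1) :=
  Finset.prod_Icc_succ_top n.succ_pos w

theorem weightProd_ne_zero {R : Type*} [CommMonoidWithZero R] [NoZeroDivisors R] [Nontrivial R]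
    {w : ℕ → R} (hw : ∀ n, w n ≠ 0) (n : ℕ) : weightProd w n ≠ 0 :=
  Finset.prod_ne_zero_iff.2 fun ν _ => hw ν

/-- `B` is the weighted backward shift `B_w`, described by its coordinates. -/
def IsWeightedBackwardShift {R : Type*} [TopologicalSpace R] [MulZeroClass R] (w : ℕ → R)
    (B : C₀(ℕ, R) → C₀(ℕ, R)) : Prop :=
  ∀ (x : C₀(ℕ, R)) (n : ℕ), B x n = w (n + 1) * x (n + 1)

theorem IsWeightedBackwardShift.weightProd_mul_iterate_apply {R : Type*} [TopologicalSpace R]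
    [CommMonoidWithZero R] {w : ℕ → R} {B : C₀(ℕ, R) → C₀(ℕ, R)} (hB : IsWeightedBackwardShift w B)
    (n k : ℕ) (x : C₀(ℕ, R)) :
    weightProd w k * (B^[n] x) k = weightProd w (n + k) * x (n + k) := by
  induction n generalizing x with
  | zero => simp only [Function.iterate_zero, id, zero_add]
  | succ n ih =>
    rw [Function.iterate_succ_apply, ih, hB, ← mul_assoc, ← weightProd_succ, Nat.add_right_comm]

theorem norm_weightProd_add_le {R : Type*} [SeminormedCommRing R] {w : ℕ → R} {C : ℝ}
    (hC : 0 ≤ C) (hw : ∀ n, ‖w n‖ ≤ C) (a d : ℕ) :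
    ‖weightProd w (a + d)‖ ≤ ‖weightProd w a‖ * C ^ d := by
  induction d with
  | zero => simp only [add_zero, pow_zero, mul_one, le_refl]
  | succ d ih =>
    calc ‖weightProd w (a + d + 1)‖ ≤ ‖weightProd w (a + d)‖ * ‖w (a + d + 1)‖ := by
          rw [weightProd_succ]; exact norm_mul_le _ _
      _ ≤ ‖weightProd w a‖ * C ^ d * C := by gcongr; exact hw _
      _ = ‖weightProd w a‖ * C ^ (d + 1) := by rw [pow_succ, mul_assoc]

theorem tendsto_norm_weightProd_of_le {R : Type*} [SeminormedCommRing R] {w : ℕ → R}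
    (hw : ∃ C : ℝ, ∀ n, ‖w n‖ ≤ C) {l : Filter ℕ} {j p : ℕ} (hjp : j ≤ p)
    (h : Tendsto (fun n => ‖weightProd w (n + p)‖) l atTop) :
    Tendsto (fun n => ‖weightProd w (n + j)‖) l atTop := by
  obtain ⟨C, hC⟩ := hw
  have hC' : ∀ n, ‖w n‖ ≤ max C 1 := fun n => (hC n).trans (le_max_left C 1)
  have pow_pos : 0 < max C 1 ^ (p - j) := by positivity
  refine tendsto_atTop_mono (fun n => ?_) (h.atTop_div_const pow_pos)
  rw [div_le_iff₀ pow_pos]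
  simpa only [add_assoc, Nat.add_sub_cancel' hjp] using
    norm_weightProd_add_le (by positivity) hC' (n + j) (p - j)

end WeightProd

theorem exists_seq_forall_le {α : Type*} [Preorder α] [Nonempty α] [IsDirectedOrder α]
    (g : ℕ → ℕ → ℕ → α) : ∃ b : ℕ → α, ∀ t, ∀ s ≤ t, ∀ k ≤ t, g t s k ≤ b t := by
  choose b hb using fun t =>
    ((Finset.Iic t ×ˢ Finset.Iic t).image fun q => g t q.1 q.2).exists_le
  refine ⟨b, fun t s hs k hk => hb t _ (Finset.mem_image.2 ⟨(s, k), ?_, rfl⟩)⟩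
  exact Finset.mem_product.2 ⟨Finset.mem_Iic.2 hs, Finset.mem_Iic.2 hk⟩

section SeparatedFamily

/-- The combinatorial condition of the theorem for the absolute values `W n = |w₁ ⋯ wₙ|`, with the
index of the family running over all of `ℕ` and the two cases of (ii) merged into one by asking for
the bound `M (max p q)` whenever `n < m`. -/
structure IsSeparatedFamily (W M : ℕ → ℝ) (A : ℕ → Set ℕ) : Prop where
  pairwise_disjoint : Pairwise (Function.onFun Disjoint A)
  tendsto_atTop : ∀ ⦃p j : ℕ⦄, j ≤ p → Tendsto (fun n => W (n + j)) (atTop ⊓ 𝓟 (A p)) atTop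
  lt_apply : ∀ ⦃p q n m j : ℕ⦄, n ∈ A p → m ∈ A q → n < m → j ≤ q → M (max p q) < W (m - n + j)

/-- The blocks `n + [0, s]`, for `n ∈ D s` and `s : ℕ`, do not overlap: a position determines the
index `s` of the block containing it and its offset in that block. -/
def BlocksDisjoint (D : ℕ → Set ℕ) : Prop :=
  ∀ ⦃s t n m k l : ℕ⦄, n ∈ D s → m ∈ D t → k ≤ s → l ≤ t → n + k = m + l → s = t ∧ k = l

variable {W M b : ℕ → ℝ} {A D : ℕ → Set ℕ}

theorem IsSeparatedFamily.mono (h : IsSeparatedFamily W M A) {φ : ℕ → ℕ} (hφ : StrictMono φ)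
    (hb : ∀ s, b s ≤ M (φ s)) (hD : ∀ s, D s ⊆ A (φ s)) : IsSeparatedFamily W b D where
  pairwise_disjoint s t hst :=
    (h.pairwise_disjoint (hφ.injective.ne hst)).mono (hD s) (hD t)
  tendsto_atTop s j hj :=
    (h.tendsto_atTop (hj.trans hφ.le_apply)).mono_left
      (inf_le_inf_left _ (principal_mono.2 (hD s)))
  lt_apply s t n m j hn hm hnm hj := by
    refine (hb _).trans_lt ?_
    rw [hφ.monotone.map_max]
    exact h.lt_apply (hD s hn) (hD t hm) hnm (hj.trans hφ.le_apply)

theorem IsSeparatedFamily.exists_forall_le (h : IsSeparatedFamily W M A) (p : ℕ) (r : ℝ) :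
    ∃ N, ∀ n ∈ A p, N < n → ∀ j ≤ p, r ≤ W (n + j) := by
  have eventually_le : ∀ᶠ n in atTop ⊓ 𝓟 (A p), ∀ j ∈ Set.Iic p, r ≤ W (n + j) :=
    (eventually_all_finite (Set.finite_Iic p)).2 fun _ hj =>
      (h.tendsto_atTop hj).eventually_ge_atTop r
  obtain ⟨N, hN⟩ := eventually_atTop.1 (eventually_inf_principal.1 eventually_le)
  exact ⟨N, fun n hn hNn => hN n hNn.le hn⟩

theorem IsSeparatedFamily.exists_refinement (h : IsSeparatedFamily W M A)
    (hM : Tendsto M atTop atTop) {𝒜 : Set (Set ℕ)} (h𝒜 : FinInvariant 𝒜) (hA : ∀ p, A p ∈ 𝒜)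
    (b : ℕ → ℝ) :
    ∃ D : ℕ → Set ℕ, (∀ s, D s ∈ 𝒜) ∧ IsSeparatedFamily W b D ∧
      ∀ s, ∀ n ∈ D s, ∀ j ≤ s, b s ≤ W (n + j) := by
  obtain ⟨φ, hφ, hbM⟩ := extraction_forall_of_eventually fun s => hM.eventually_ge_atTop (b s)
  choose N hN using fun s => h.exists_forall_le (φ s) (b s)
  refine ⟨fun s => A (φ s) \ Set.Iic (N s), fun s => h𝒜 _ (hA _) _,
    h.mono hφ hbM fun s => Set.sdiff_subset, fun s n hn j hj => ?_⟩
  exact hN s n hn.1 (not_le.1 hn.2) j (hj.trans hφ.le_apply)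

theorem IsSeparatedFamily.max_lt_sub (h : IsSeparatedFamily W b D)
    (hb : ∀ s, ∀ k ≤ s, W k ≤ b s) {s t n m : ℕ} (hn : n ∈ D s) (hm : m ∈ D t) (hnm : n < m) :
    max s t < m - n := by
  by_contra! hle
  exact (h.lt_apply hn hm hnm t.zero_le).not_ge (hb _ _ hle)

theorem IsSeparatedFamily.blocksDisjoint (h : IsSeparatedFamily W b D)
    (hb : ∀ s, ∀ k ≤ s, W k ≤ b s) : BlocksDisjoint D := by
  intro s t n m k l hn hm hk hl hkl
  rcases lt_trichotomy n m with hlt | rfl | hlt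
  · have := h.max_lt_sub hb hn hm hlt
    omega
  · exact ⟨h.pairwise_disjoint.eq (Set.not_disjoint_iff.2 ⟨n, hn, hm⟩), by omega⟩
  · have := h.max_lt_sub hb hm hn hlt
    omega

theorem IsSeparatedFamily.lt_apply_of_le (h : IsSeparatedFamily W M A) {p r n m : ℕ} (hpr : p ≤ r)
    (hn : n ∈ A p) (hm : m ∈ A r) :
    (m < n → ∀ j ≤ p, M r < W (n - m + j)) ∧ (n < m → ∀ j ≤ r, M r < W (m - n + j)) := by
  refine ⟨fun hmn j hj => ?_, fun hnm j hj => ?_⟩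
  · simpa only [max_eq_left hpr] using h.lt_apply hm hn hmn hj
  · simpa only [max_eq_right hpr] using h.lt_apply hn hm hnm hj

theorem isSeparatedFamily_of_forall_le (hdisj : Pairwise (Function.onFun Disjoint A))
    (htop : ∀ p, ∀ j ≤ p, Tendsto (fun n => W (n + j)) (atTop ⊓ 𝓟 (A p)) atTop)
    (hlt : ∀ p r, p ≤ r → ∀ n ∈ A p, ∀ m ∈ A r,
      (m < n → ∀ j ≤ p, M r < W (n - m + j)) ∧ (n < m → ∀ j ≤ r, M r < W (m - n + j))) :
    IsSeparatedFamily W M A where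
  pairwise_disjoint := hdisj
  tendsto_atTop := htop
  lt_apply p q n m j hn hm hnm hj := by
    rcases le_total p q with hpq | hqp
    · simpa only [max_eq_right hpq] using (hlt p q hpq n hn m hm).2 hnm j hj
    · simpa only [max_eq_left hqp] using (hlt q p hqp m hm n hn).1 hnm j hj

theorem BlocksDisjoint.pairwise_disjoint (hD : BlocksDisjoint D) :
    Pairwise (Function.onFun Disjoint D) := fun s t hst =>
  Set.disjoint_left.2 fun _ hs ht => hst (hD hs ht s.zero_le t.zero_le rfl).1

theorem BlocksDisjoint.lt_sub_add (hD : BlocksDisjoint D) {s t n m j : ℕ} (hn : n ∈ D s)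
    (hm : m ∈ D t) (hnm : n < m) (hj : j ≤ t) : s < m - n + j := by
  by_contra! hle
  have := (hD hn hm hle hj (by omega)).2
  omega

theorem BlocksDisjoint.lt_of_add_eq_add (hD : BlocksDisjoint D) {s t n m i j : ℕ} (hn : n ∈ D s)
    (hm : m ∈ D t) (hi : s < i) (hj : j ≤ t) (hij : n + i = m + j) : n < m := by
  rcases lt_trichotomy n m with hlt | rfl | hlt
  · exact hlt
  · have := (hD hn hm s.zero_le t.zero_le rfl).1
    omega
  · have := hD.lt_sub_add hm hn hlt s.zero_le
    omega

end SeparatedFamily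

section Glue

/-- The sequence carrying the word `u s 0, …, u s s` on each block `n + [0, s]`, `n ∈ D s`, and
vanishing off the blocks. Where blocks overlap an arbitrary one of them prevails. -/
noncomputable def glue {E : Type*} [Zero E] (D : ℕ → Set ℕ) (u : ℕ → ℕ → E) : ℕ → E :=
  Function.extend (fun q : {q : ℕ × ℕ × ℕ // q.2.1 ∈ D q.1 ∧ q.2.2 ≤ q.1} => q.1.2.1 + q.1.2.2)
    (fun q => u q.1.1 q.1.2.2) 0

theorem glue_add {E : Type*} [Zero E] {D : ℕ → Set ℕ} (hD : BlocksDisjoint D) (u : ℕ → ℕ → E)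
    {s n k : ℕ} (hn : n ∈ D s) (hk : k ≤ s) : glue D u (n + k) = u s k := by
  refine Function.FactorsThrough.extend_apply (f := fun q :
    {q : ℕ × ℕ × ℕ // q.2.1 ∈ D q.1 ∧ q.2.2 ≤ q.1} => q.1.2.1 + q.1.2.2)
    ?_ 0 ⟨(s, n, k), hn, hk⟩
  rintro ⟨⟨s, n, k⟩, hn, hk⟩ ⟨⟨t, m, l⟩, hm, hl⟩ heq
  obtain ⟨rfl, rfl⟩ := hD hn hm hk hl heq
  rfl

theorem glue_eq_zero_or {E : Type*} [Zero E] (D : ℕ → Set ℕ) (u : ℕ → ℕ → E) (i : ℕ) :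
    glue D u i = 0 ∨ ∃ s, ∃ n ∈ D s, ∃ k ≤ s, n + k = i := by
  refine or_iff_not_imp_right.2 fun h => Function.extend_apply' _ _ _ ?_
  rintro ⟨⟨⟨s, n, k⟩, hn, hk⟩, rfl⟩
  exact h ⟨s, n, hn, k, hk, rfl⟩

theorem tendsto_zero_of_blocks {E : Type*} [SeminormedAddCommGroup E] {D : ℕ → Set ℕ} {f : ℕ → E}
    {δ : ℕ → ℝ} (hsupp : ∀ i, f i = 0 ∨ ∃ s, ∃ n ∈ D s, ∃ k ≤ s, n + k = i)
    (hlim : ∀ s, ∀ k ≤ s, Tendsto (fun n => f (n + k)) (atTop ⊓ 𝓟 (D s)) (𝓝 0))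
    (hδ : Tendsto δ atTop (𝓝 0)) (hle : ∀ s, ∀ n ∈ D s, ∀ k ≤ s, ‖f (n + k)‖ ≤ δ s) :
    Tendsto f atTop (𝓝 0) := by
  refine NormedAddGroup.tendsto_nhds_zero.2 fun ε hε => ?_
  obtain ⟨T, hT⟩ := eventually_atTop.1 (hδ.eventually_lt_const hε)
  have eventually_block : ∀ s, ∀ k ≤ s, ∀ᶠ i in atTop, i - k ∈ D s → ‖f (i - k + k)‖ < ε :=
    fun s k hk => (tendsto_sub_atTop_nat k).eventually
      (eventually_inf_principal.1 (NormedAddGroup.tendsto_nhds_zero.1 (hlim s k hk) ε hε))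
  have eventually_short : ∀ᶠ i in atTop, ∀ s ∈ Set.Iio T, ∀ k ∈ Set.Iic s,
      i - k ∈ D s → ‖f (i - k + k)‖ < ε :=
    (eventually_all_finite (Set.finite_Iio T)).2 fun s _ =>
      (eventually_all_finite (Set.finite_Iic s)).2 fun k hk => eventually_block s k hk
  filter_upwards [eventually_short] with i hi
  rcases hsupp i with hzero | ⟨s, n, hn, k, hk, rfl⟩
  · rwa [hzero, norm_zero]
  · rcases lt_or_ge s T with hs | hs
    · simpa only [Nat.add_sub_cancel] using hi s hs k hk (by rwa [Nat.add_sub_cancel])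
    · exact (hle s n hn k hk).trans_lt (hT s hs)

variable {E : Type*} [SeminormedAddCommGroup E] {W b : ℕ → ℝ} {D : ℕ → Set ℕ} {u : ℕ → ℕ → E}

theorem IsSeparatedFamily.norm_glue_div_tendsto_zero (h : IsSeparatedFamily W b D)
    (hD : BlocksDisjoint D) (hW : ∀ i, 0 < W i) (hu : ∀ s, ∀ k ≤ s, (s + 1) * ‖u s k‖ ≤ b s)
    (hb : ∀ s, ∀ n ∈ D s, ∀ k ≤ s, b s ≤ W (n + k)) :
    Tendsto (fun i => ‖glue D u i‖ / W i) atTop (𝓝 0) := by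
  refine tendsto_zero_of_blocks (D := D) (fun i => ?_) (fun s k hk => ?_)
    tendsto_one_div_add_atTop_nhds_zero_nat fun s n hn k hk => ?_
  · refine (glue_eq_zero_or D u i).imp_left fun hzero => ?_
    rw [hzero, norm_zero, zero_div]
  · refine ((h.tendsto_atTop hk).const_div_atTop ‖u s k‖).congr' ?_
    refine eventually_inf_principal.2 (Eventually.of_forall fun n hn => ?_)
    simp only [glue_add hD u hn hk]
  · rw [glue_add hD u hn hk, norm_div, norm_norm, Real.norm_of_nonneg (hW _).le,
      div_le_div_iff₀ (hW _) s.cast_add_one_pos, mul_comm, one_mul]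
    exact (hu s k hk).trans (hb s n hn k hk)

theorem IsSeparatedFamily.norm_glue_add_div_le (h : IsSeparatedFamily W b D)
    (hD : BlocksDisjoint D) (hW : ∀ i, 0 < W i)
    (hu : ∀ t, ∀ s ≤ t, ∀ k ≤ s, (t + 1) * ‖u s k‖ ≤ b t) {s n i : ℕ} (hn : n ∈ D s)
    (hi : s < i) : ‖glue D u (n + i)‖ / W i ≤ 1 / (s + 1) := by
  rcases glue_eq_zero_or D u (n + i) with hzero | ⟨t, m, hm, j, hj, hij⟩
  · rw [hzero, norm_zero, zero_div]
    positivity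
  · have hnm : n < m := hD.lt_of_add_eq_add hn hm hi hj hij.symm
    have hi_eq : m - n + j = i := by omega
    rw [← hij, glue_add hD u hm hj, div_le_div_iff₀ (hW i) s.cast_add_one_pos, one_mul, mul_comm]
    calc ((s : ℝ) + 1) * ‖u t j‖ ≤ ((max s t : ℕ) + 1) * ‖u t j‖ := by
          gcongr; exact le_max_left s t
      _ ≤ b (max s t) := hu _ t (le_max_right s t) j hj
      _ ≤ W i := hi_eq ▸ (h.lt_apply hn hm hnm hj).le

end Glue

section Sufficiency

variable {𝕜 : Type*} [NormedField 𝕜] {w : ℕ → 𝕜} {B : C₀(ℕ, 𝕜) → C₀(ℕ, 𝕜)}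

theorem IsWeightedBackwardShift.exists_dist_iterate_le (hB : IsWeightedBackwardShift w B)
    (hw : ∀ n, w n ≠ 0) {𝒜 : Set (Set ℕ)} (h𝒜 : FinInvariant 𝒜) {M : ℕ → ℝ}
    (hM : Tendsto M atTop atTop) {A : ℕ → Set ℕ} (hA : ∀ p, A p ∈ 𝒜)
    (h : IsSeparatedFamily (fun n => ‖weightProd w n‖) M A) (v : ℕ → C₀(ℕ, 𝕜))
    (hv : ∀ s k, s < k → v s k = 0) :
    ∃ x : C₀(ℕ, 𝕜), ∃ D : ℕ → Set ℕ, (∀ s, D s ∈ 𝒜) ∧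
      ∀ s, ∀ n ∈ D s, dist (B^[n] x) (v s) ≤ 1 / (s + 1) := by
  have hne := weightProd_ne_zero hw
  have hpos : ∀ i, 0 < ‖weightProd w i‖ := fun i => norm_pos_iff.2 (hne i)
  let u : ℕ → ℕ → 𝕜 := fun s k => weightProd w k * v s k
  obtain ⟨b, hb⟩ := exists_seq_forall_le fun t s k : ℕ =>
    max ‖weightProd w k‖ ((t + 1) * ‖u s k‖)
  have hbW : ∀ s, ∀ k ≤ s, ‖weightProd w k‖ ≤ b s := fun s k hk =>
    (le_max_left _ _).trans (hb s s le_rfl k hk)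
  have hbu : ∀ t : ℕ, ∀ s ≤ t, ∀ k ≤ s, (t + 1) * ‖u s k‖ ≤ b t := fun t s hs k hk =>
    (le_max_right _ _).trans (hb t s hs k (hk.trans hs))
  obtain ⟨D, hD𝒜, hD, hbD⟩ := h.exists_refinement hM h𝒜 hA b
  have hblocks := hD.blocksDisjoint hbW
  obtain ⟨x, hx⟩ := exists_zeroAtInfty_coe_eq (f := fun i => glue D u i / weightProd w i) <|
    tendsto_zero_iff_norm_tendsto_zero.2 <| by
      simpa only [norm_div] using
        hD.norm_glue_div_tendsto_zero hblocks hpos (fun s => hbu s s le_rfl) hbD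
  have iterate_apply : ∀ n k, (B^[n] x) k = glue D u (n + k) / weightProd w k := fun n k => by
    rw [eq_div_iff (hne k), mul_comm, hB.weightProd_mul_iterate_apply, hx,
      mul_div_cancel₀ _ (hne _)]
  refine ⟨x, D, hD𝒜, fun s n hn => zeroAtInfty_dist_le (by positivity) fun k => ?_⟩
  rw [iterate_apply]
  rcases le_or_gt k s with hk | hk
  · rw [glue_add hblocks u hn hk, mul_div_cancel_left₀ _ (hne k), dist_self]
    positivity
  · rw [hv s k hk, dist_zero_right, norm_div]
    exact hD.norm_glue_add_div_le hblocks hpos hbu hn hk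

theorem IsWeightedBackwardShift.exists_isHypercyclicVectorFor
    [TopologicalSpace.SeparableSpace 𝕜] (hB : IsWeightedBackwardShift w B) (hw : ∀ n, w n ≠ 0)
    {𝒜 : Set (Set ℕ)} (hfur : FurstenbergFamily 𝒜) (hfi : FinInvariant 𝒜) {M : ℕ → ℝ}
    (hM : Tendsto M atTop atTop) {A : ℕ → Set ℕ} (hA : ∀ p, A p ∈ 𝒜)
    (h : IsSeparatedFamily (fun n => ‖weightProd w n‖) M A) :
    ∃ x, IsHypercyclicVectorFor 𝒜 B x := by
  obtain ⟨v, hsupp, hdense⟩ := exists_seq_zeroAtInfty_forall_mapClusterPt (E := 𝕜)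
  obtain ⟨x, D, hD, hx⟩ := hB.exists_dist_iterate_le hw hfi hM hA h v hsupp
  exact ⟨x, isHypercyclicVectorFor_of_dist_le hfur hdense hD
    tendsto_one_div_add_atTop_nhds_zero_nat hx⟩

end Sufficiency

section Necessity

theorem exists_seq_norm_ge_dist_ge (𝕜 : Type*) [NontriviallyNormedField 𝕜] :
    ∃ d : ℕ → 𝕜, (∀ i : ℕ, i + 1 ≤ ‖d i‖) ∧ Pairwise fun i j => 1 ≤ dist (d i) (d j) := by
  obtain ⟨c, hc⟩ := NormedField.exists_lt_norm 𝕜 2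
  have dist_ge : ∀ i j, i < j → 1 ≤ dist (c ^ (i + 1)) (c ^ (j + 1)) := fun i j hij => by
    have h_one : 1 ≤ ‖c‖ ^ (i + 1) := one_le_pow₀ (by linarith)
    have h_pow : ‖c‖ ^ (i + 1) * ‖c‖ ≤ ‖c‖ ^ (j + 1) := by
      rw [← pow_succ]
      exact pow_le_pow_right₀ (by linarith) (Nat.succ_lt_succ hij)
    calc 1 ≤ ‖c‖ ^ (j + 1) - ‖c‖ ^ (i + 1) := by nlinarith
      _ ≤ dist (c ^ (i + 1)) (c ^ (j + 1)) := by
        simpa only [norm_pow, dist_eq_norm'] using norm_sub_norm_le (c ^ (j + 1)) (c ^ (i + 1))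
  refine ⟨fun i => c ^ (i + 1), fun i => ?_, fun i j hij => ?_⟩
  · calc (i : ℝ) + 1 ≤ 2 ^ (i + 1) := mod_cast (Nat.lt_two_pow_self (n := i + 1)).le
      _ ≤ ‖c‖ ^ (i + 1) := by gcongr
      _ = ‖c ^ (i + 1)‖ := (norm_pow c _).symm
  · rcases hij.lt_or_gt with hlt | hlt
    · exact dist_ge i j hlt
    · exact (dist_ge j i hlt).trans_eq (dist_comm _ _)

/-- The information kept from the orbit of a hypercyclic vector `x` in the coordinates
`y i = w₁ ⋯ wᵢ * x i`: at the times in `A p`, the block `n + [0, p]` of `y` is close to the word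
`d (Nat.pair p 0), …, d (Nat.pair p p)`, and beyond the block `y` is small compared with `W`. -/
structure IsOrbitCode {E : Type*} [SeminormedAddCommGroup E] (d y : ℕ → E) (W : ℕ → ℝ)
    (A : ℕ → Set ℕ) : Prop where
  dist_lt : ∀ ⦃p n k : ℕ⦄, n ∈ A p → k ≤ p → dist (y (n + k)) (d (Nat.pair p k)) < 1 / 2
  norm_lt : ∀ ⦃p n i : ℕ⦄, n ∈ A p → p < i → 2 * (p + 1) * ‖y (n + i)‖ < W i

namespace IsOrbitCode

variable {E : Type*} [SeminormedAddCommGroup E] {d y : ℕ → E} {W : ℕ → ℝ} {A : ℕ → Set ℕ}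

theorem blocksDisjoint (h : IsOrbitCode d y W A) (hd : Pairwise fun i j => 1 ≤ dist (d i) (d j)) :
    BlocksDisjoint A := by
  intro p q n m k l hn hm hk hl hkl
  refine Nat.pair_eq_pair.1 (hd.eq (not_le.2 ?_))
  have hk' := h.dist_lt hn hk
  have hl' := h.dist_lt hm hl
  rw [hkl] at hk'
  linarith [dist_triangle_left (d (Nat.pair p k)) (d (Nat.pair q l)) (y (m + l))]

theorem lt_norm (h : IsOrbitCode d y W A) (hd : ∀ i : ℕ, i + 1 ≤ ‖d i‖) {p n k : ℕ}
    (hn : n ∈ A p) (hk : k ≤ p) : p + 1 / 2 < ‖y (n + k)‖ := by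
  have hpair : (p : ℝ) ≤ Nat.pair p k := mod_cast Nat.left_le_pair p k
  have hsub := norm_sub_norm_le (d (Nat.pair p k)) (y (n + k))
  rw [← dist_eq_norm, dist_comm] at hsub
  linarith [hd (Nat.pair p k), h.dist_lt hn hk]

theorem isSeparatedFamily (h : IsOrbitCode d y W A) (hd : ∀ i : ℕ, i + 1 ≤ ‖d i‖)
    (hd' : Pairwise fun i j => 1 ≤ dist (d i) (d j)) (hW : ∀ i, 0 < W i)
    (hy : Tendsto (fun i => ‖y i‖ / W i) atTop (𝓝 0)) :
    IsSeparatedFamily W (fun p => p + 1) A where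
  pairwise_disjoint := (h.blocksDisjoint hd').pairwise_disjoint
  tendsto_atTop p j hj := by
    have eventually_large : ∀ᶠ n in atTop ⊓ 𝓟 (A p), 1 / 2 < ‖y (n + j)‖ :=
      eventually_inf_principal.2 <| Eventually.of_forall fun n hn =>
        lt_of_le_of_lt (le_add_of_nonneg_left p.cast_nonneg) (h.lt_norm hd hn hj)
    have ratio_tendsto : Tendsto (fun n => ‖y (n + j)‖ / W (n + j)) (atTop ⊓ 𝓟 (A p)) (𝓝[>] 0) :=
      tendsto_nhdsWithin_iff.2
        ⟨(hy.comp (tendsto_add_atTop_nat j)).mono_left inf_le_left,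
          eventually_large.mono fun n hn => div_pos (one_half_pos.trans hn) (hW _)⟩
    refine tendsto_atTop_mono' _ ?_
      (ratio_tendsto.inv_tendsto_nhdsGT_zero.const_mul_atTop (one_half_pos (α := ℝ)))
    filter_upwards [eventually_large] with n hn
    rw [Pi.inv_apply, inv_div, ← mul_div_assoc, div_le_iff₀ (one_half_pos.trans hn), mul_comm]
    exact mul_le_mul_of_nonneg_left hn.le (hW _).le
  lt_apply p q n m j hn hm hnm hj := by
    have hsmall := h.norm_lt hn ((h.blocksDisjoint hd').lt_sub_add hn hm hnm hj)
    rw [show n + (m - n + j) = m + j by omega] at hsmall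
    have hmax : ((max p q : ℕ) : ℝ) ≤ p + q :=
      mod_cast max_le (Nat.le_add_right p q) (Nat.le_add_left q p)
    calc ((max p q : ℕ) : ℝ) + 1 ≤ 2 * (p + 1) * (q + 1 / 2) := by
          nlinarith [(p * q : ℕ).cast_nonneg (α := ℝ)]
      _ ≤ 2 * (p + 1) * ‖y (m + j)‖ := by gcongr; exact (h.lt_norm hd hm hj).le
      _ < W (m - n + j) := hsmall

end IsOrbitCode

variable {𝕜 : Type*} [NormedField 𝕜] {w : ℕ → 𝕜} {B : C₀(ℕ, 𝕜) → C₀(ℕ, 𝕜)}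

theorem IsWeightedBackwardShift.exists_isOrbitCode (hB : IsWeightedBackwardShift w B)
    (hw : ∀ n, w n ≠ 0) {𝒜 : Set (Set ℕ)} {x : C₀(ℕ, 𝕜)} (hx : IsHypercyclicVectorFor 𝒜 B x)
    (d : ℕ → 𝕜) :
    ∃ A : ℕ → Set ℕ, (∀ p, A p ∈ 𝒜) ∧
      IsOrbitCode d (fun i => weightProd w i * x i) (fun i => ‖weightProd w i‖) A := by
  have hne := weightProd_ne_zero hw
  obtain ⟨S, hS⟩ := exists_seq_forall_le fun p _ k : ℕ => max ‖weightProd w k‖ (p + 1)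
  have hWS : ∀ p, ∀ k ≤ p, ‖weightProd w k‖ ≤ S p := fun p k hk =>
    (le_max_left _ _).trans (hS p p le_rfl k hk)
  have hpS : ∀ p : ℕ, p + 1 ≤ S p := fun p => (le_max_right _ _).trans (hS p p le_rfl p le_rfl)
  have hS0 : ∀ p, 0 < S p := fun p => p.cast_add_one_pos.trans_le (hpS p)
  choose v hv using fun p => exists_zeroAtInfty_coe_eq (E := 𝕜)
    (f := fun k => if k ≤ p then d (Nat.pair p k) / weightProd w k else 0)
    (tendsto_const_nhds.congr' ((eventually_gt_atTop p).mono fun k hk => (if_neg hk.not_ge).symm))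
  have coord_lt : ∀ p n, B^[n] x ∈ Metric.ball (v p) (1 / (2 * S p)) →
      ∀ k, dist ((B^[n] x) k) (v p k) * (2 * S p) < 1 := fun p n hn k =>
    (lt_div_iff₀ (mul_pos two_pos (hS0 p))).1 ((zeroAtInfty_dist_apply_le _ _ k).trans_lt hn)
  refine ⟨fun p => {n | B^[n] x ∈ Metric.ball (v p) (1 / (2 * S p))}, fun p =>
    hx _ Metric.isOpen_ball ⟨v p, Metric.mem_ball_self (by have := hS0 p; positivity)⟩, ?_, ?_⟩
  · intro p n k hn hk
    have hlt := coord_lt p n hn k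
    have hd : d (Nat.pair p k) = weightProd w k * v p k := by
      simp only [hv, if_pos hk, mul_div_cancel₀ _ (hne k)]
    rw [← hB.weightProd_mul_iterate_apply, hd, dist_eq_norm, ← mul_sub, norm_mul, ← dist_eq_norm]
    linarith [mul_le_mul_of_nonneg_right (hWS p k hk)
      (dist_nonneg (x := (B^[n] x) k) (y := v p k))]
  · intro p n i hn hi
    have hlt := coord_lt p n hn i
    have hv0 : v p i = 0 := by simp only [hv, if_neg hi.not_ge]
    rw [hv0, dist_zero_right] at hlt
    rw [← hB.weightProd_mul_iterate_apply, norm_mul]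
    calc 2 * (p + 1) * (‖weightProd w i‖ * ‖(B^[n] x) i‖)
        ≤ 2 * S p * (‖weightProd w i‖ * ‖(B^[n] x) i‖) := by gcongr; exact hpS p
      _ = ‖weightProd w i‖ * (‖(B^[n] x) i‖ * (2 * S p)) := by ring
      _ < ‖weightProd w i‖ := mul_lt_of_lt_one_right (norm_pos_iff.2 (hne i)) hlt

theorem IsWeightedBackwardShift.exists_isSeparatedFamily {𝕜 : Type*} [NontriviallyNormedField 𝕜]
    {w : ℕ → 𝕜} {B : C₀(ℕ, 𝕜) → C₀(ℕ, 𝕜)} (hB : IsWeightedBackwardShift w B)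
    (hw : ∀ n, w n ≠ 0) {𝒜 : Set (Set ℕ)} {x : C₀(ℕ, 𝕜)} (hx : IsHypercyclicVectorFor 𝒜 B x) :
    ∃ A : ℕ → Set ℕ, (∀ p, A p ∈ 𝒜) ∧
      IsSeparatedFamily (fun n => ‖weightProd w n‖) (fun p => p + 1) A := by
  have hpos : ∀ i, 0 < ‖weightProd w i‖ := fun i => norm_pos_iff.2 (weightProd_ne_zero hw i)
  obtain ⟨d, hd, hd'⟩ := exists_seq_norm_ge_dist_ge 𝕜
  obtain ⟨A, hA, hcode⟩ := hB.exists_isOrbitCode hw hx d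
  refine ⟨A, hA, hcode.isSeparatedFamily hd hd' hpos ?_⟩
  simpa only [norm_mul, mul_div_cancel_left₀ _ (hpos _).ne'] using
    tendsto_zero_iff_norm_tendsto_zero.1 (zeroAtInfty_tendsto_atTop x)

end Necessity

theorem weightedShift_AHypercyclic_iff_c₀_arbitraryFamily_general {𝕜 : Type*}
    [NontriviallyNormedField 𝕜] [TopologicalSpace.SeparableSpace 𝕜] (w : ℕ → 𝕜)
    (hw0 : ∀ n, w n ≠ 0) (hwb : ∃ C : ℝ, ∀ n, ‖w n‖ ≤ C) (B : C₀(ℕ, 𝕜) → C₀(ℕ, 𝕜))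
    (hB : IsWeightedBackwardShift w B) (𝒜 : Set (Set ℕ)) (hfur : FurstenbergFamily 𝒜)
    (hfi : FinInvariant 𝒜) :
    (∃ x, IsHypercyclicVectorFor 𝒜 B x) ↔
      ∃ M : ℕ → ℝ, (∀ p, 0 < M p) ∧ Tendsto M atTop atTop ∧
        ∃ A : ℕ → Set ℕ, (∀ p, 1 ≤ p → A p ∈ 𝒜) ∧
          (∀ p, 1 ≤ p → ∀ r, 1 ≤ r → p ≠ r → Disjoint (A p) (A r)) ∧
          (∀ p, 1 ≤ p → Tendsto (fun n => ‖weightProd w (n + p)‖) (atTop ⊓ 𝓟 (A p)) atTop) ∧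
          (∀ p r, 1 ≤ p → p ≤ r → ∀ n ∈ A p, ∀ m ∈ A r, n ≠ m →
            (m < n → ∀ j ≤ p, M r < ‖weightProd w (n - m + j)‖) ∧
            (n < m → ∀ j ≤ r, M r < ‖weightProd w (m - n + j)‖)) := by
  constructor
  · rintro ⟨x, hx⟩
    obtain ⟨A, hA, h⟩ := hB.exists_isSeparatedFamily hw0 hx
    exact ⟨fun p => p + 1, fun p => p.cast_add_one_pos,
      tendsto_atTop_add_const_right _ 1 tendsto_natCast_atTop_atTop, A, fun p _ => hA p,
      fun p _ r _ hpr => h.pairwise_disjoint hpr, fun p _ => h.tendsto_atTop le_rfl,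
      fun p r _ hpr n hn m hm _ => h.lt_apply_of_le hpr hn hm⟩
  · rintro ⟨M, -, hM, A, hA, hdisj, htop, hlt⟩
    have h : IsSeparatedFamily (fun n => ‖weightProd w n‖) (fun p => M (p + 1))
        (fun p => A (p + 1)) := isSeparatedFamily_of_forall_le
      (fun p r hpr => hdisj _ p.succ_pos _ r.succ_pos (Nat.succ_injective.ne hpr))
      (fun p j hj => tendsto_norm_weightProd_of_le hwb (Nat.le_succ_of_le hj)
        (htop _ p.succ_pos))
      (fun p r hpr n hn m hm =>
        ⟨fun hmn j hj => (hlt _ _ p.succ_pos (Nat.succ_le_succ hpr) n hn m hm hmn.ne').1 hmn j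
            (Nat.le_succ_of_le hj),
          fun hnm j hj => (hlt _ _ p.succ_pos (Nat.succ_le_succ hpr) n hn m hm hnm.ne).2 hnm j
            (Nat.le_succ_of_le hj)⟩)
    exact hB.exists_isHypercyclicVectorFor hw0 hfur hfi (hM.comp (tendsto_add_atTop_nat 1))
      (fun p => hA _ p.succ_pos) h

/-- Characterization of `𝒜`-hypercyclic weighted backward shifts on `c₀` for an arbitrary
finitely invariant Furstenberg family `𝒜`: for a bounded sequence `w` of nonzero scalars,
the weighted backward shift `B_w` (given as the continuous linear operator `Bw` with
`(Bw x) n = w (n+1) * x (n+1)`) is `𝒜`-hypercyclic on `c₀` iff there exist positive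
numbers `M p → ∞` and pairwise disjoint sets `A p ∈ 𝒜` (`p ≥ 1`) such that
(i) for any `p ≥ 1`, `|w₁ ⋯ w_{n+p}| → ∞` as `n → ∞` along `A p`, and (ii) for any
`n ∈ A p`, `m ∈ A q` with `p ≤ q` and `n ≠ m`, `|w₁ ⋯ w_{|n-m|+j}| > M q`, where
`j = 0, …, p` if `n > m` and `j = 0, …, q` if `n < m`. -/
theorem weightedShift_AHypercyclic_iff_c₀_arbitraryFamily {𝕜 : Type*} [RCLike 𝕜]
    (w : ℕ → 𝕜) (hw0 : ∀ n, w n ≠ 0) (hwb : ∃ C : ℝ, ∀ n, ‖w n‖ ≤ C)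
    (Bw : C₀(ℕ, 𝕜) →L[𝕜] C₀(ℕ, 𝕜))
    (hBw : ∀ (x : C₀(ℕ, 𝕜)) (n : ℕ), Bw x n = w (n + 1) * x (n + 1))
    (𝒜 : Set (Set ℕ)) (hfur : FurstenbergFamily 𝒜) (hfi : FinInvariant 𝒜) :
    (∃ x : C₀(ℕ, 𝕜), ∀ V : Set C₀(ℕ, 𝕜), IsOpen V → V.Nonempty →
        {n : ℕ | (⇑Bw)^[n] x ∈ V} ∈ 𝒜) ↔
      ∃ M : ℕ → ℝ, (∀ p, 0 < M p) ∧ Filter.Tendsto M Filter.atTop Filter.atTop ∧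
        ∃ A : ℕ → Set ℕ, (∀ p, 1 ≤ p → A p ∈ 𝒜) ∧
          (∀ p, 1 ≤ p → ∀ r, 1 ≤ r → p ≠ r → Disjoint (A p) (A r)) ∧
          (∀ p, 1 ≤ p → Filter.Tendsto (fun n : ℕ => ‖∏ ν ∈ Finset.Icc 1 (n + p), w ν‖)
            (Filter.atTop ⊓ Filter.principal (A p)) Filter.atTop) ∧
          (∀ p r, 1 ≤ p → p ≤ r → ∀ n ∈ A p, ∀ m ∈ A r, n ≠ m →
            (m < n → ∀ j ≤ p, M r < ‖∏ ν ∈ Finset.Icc 1 (n - m + j), w ν‖) ∧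
            (n < m → ∀ j ≤ r, M r < ‖∏ ν ∈ Finset.Icc 1 (m - n + j), w ν‖)) := by
  exact weightedShift_AHypercyclic_iff_c₀_arbitraryFamily_general w hw0 hwb Bw hBw 𝒜 hfur hfi
end

section
/- There exists a bounded sequence w = (w_n)_{n≥1} of nonzero scalars such that the weighted backward shift B_w on c₀ is reiteratively hypercyclic but not upper frequently hypercyclic. -/
open Filter Topology
open scoped Classical ZeroAtInfty

/-!
Take weights whose products are `w₁ ⋯ wₙ = c ^ u n` with `‖c‖ > 1`, where `u` increases by at most
one at each step, so that the weights stay bounded. For each `q`, `u` is required to be at least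
`2 * s q + q` on a set `E q`; the least such `u` exceeds the height of level `r` only within left
thickenings of the sets `E q`, `q > r`, and these are so sparse that `{n | R < ‖w₁ ⋯ wₙ‖}` has
arbitrarily small upper density for large `R`. Since the coordinates of a vector `x ∈ c₀` tend to
zero, `‖(Bⁿ x)₀‖ > 1` forces `‖w₁ ⋯ wₙ‖` to be large for all but finitely many `n`, so `B` is not
upper frequently hypercyclic.

On the other hand, place in a far-away block `j` a number `j` of copies of a finitely supported
target `y`, with spacing depending only on `y`, and divide each coordinate of each copy by the
appropriate product of weights. Shifting one copy to the origin moves the other copies to positions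
that are differences of positions in the blocks. The sets `E q` contain these positions, so the
other copies become small there. Thus the orbit approaches `y` along arbitrarily long arithmetic
progressions of fixed difference, which gives return sets of positive upper Banach density.
-/

section Density

variable {A B : Set ℕ}

/-- The counting function of a set of natural numbers: the number of elements of `A` in `[0, N]`. -/
noncomputable def countUpTo (A : Set ℕ) (N : ℕ) : ℕ :=
  ((Finset.range (N + 1)).filter (fun n => n ∈ A)).card

lemma countUpTo_le_card {F : Finset ℕ} {N : ℕ} (h : ∀ n ≤ N, n ∈ A → n ∈ F) :
    countUpTo A N ≤ F.card := by
  refine Finset.card_le_card fun n hn => ?_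
  rw [Finset.mem_filter, Finset.mem_range_succ_iff] at hn
  exact h n hn.1 hn.2

lemma countUpTo_mono {N : ℕ} (h : ∀ n ≤ N, n ∈ A → n ∈ B) : countUpTo A N ≤ countUpTo B N :=
  countUpTo_le_card fun n hn hA =>
    Finset.mem_filter.mpr ⟨Finset.mem_range_succ_iff.mpr hn, h n hn hA⟩

lemma countUpTo_pos {n N : ℕ} (hn : n ≤ N) (hA : n ∈ A) : 0 < countUpTo A N :=
  Finset.card_pos.mpr ⟨n, Finset.mem_filter.mpr ⟨Finset.mem_range_succ_iff.mpr hn, hA⟩⟩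

lemma countUpTo_union_le (A B : Set ℕ) (N : ℕ) :
    countUpTo (A ∪ B) N ≤ countUpTo A N + countUpTo B N := by
  simp only [countUpTo, Set.mem_union, Finset.filter_or]
  exact Finset.card_union_le _ _

lemma countUpTo_biUnion_le {ι : Type*} (I : Finset ι) (A : ι → Set ℕ) (N : ℕ) :
    countUpTo (⋃ i ∈ I, A i) N ≤ ∑ i ∈ I, countUpTo (A i) N := by
  refine (countUpTo_le_card (F := I.biUnion fun i => (Finset.range (N + 1)).filter (· ∈ A i))
    fun n hn hA => ?_).trans Finset.card_biUnion_le
  obtain ⟨i, hi, hni⟩ := Set.mem_iUnion₂.mp hA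
  exact Finset.mem_biUnion.mpr
    ⟨i, hi, Finset.mem_filter.mpr ⟨Finset.mem_range_succ_iff.mpr hn, hni⟩⟩

lemma countUpTo_mul_le_of_subset_Icc {l r b : ℕ} (hA : A ⊆ Set.Icc l r)
    (hb : (r + 1 - l) * b ≤ l) (N : ℕ) : countUpTo A N * b ≤ N := by
  rcases lt_or_ge N l with hN | hN
  · have : countUpTo A N ≤ (∅ : Finset ℕ).card :=
      countUpTo_le_card fun n hn hnA => absurd (hA hnA).1 (by omega)
    simp [Nat.le_zero.mp this]
  · have : countUpTo A N ≤ (Finset.Icc l r).card :=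
      countUpTo_le_card fun n _ hnA => Finset.mem_Icc.mpr (hA hnA)
    rw [Nat.card_Icc] at this
    exact ((Nat.mul_le_mul_right b this).trans hb).trans hN

lemma countUpTo_mul_le_of_mem_windows {a g h : ℕ} (hg : 2 * g ≤ a)
    (hA : ∀ n ∈ A, ∃ i, 1 ≤ i ∧ a * i ≤ n + g ∧ n < a * i + h) (N : ℕ) :
    countUpTo A N * a ≤ 2 * N * (g + h) := by
  rcases Nat.eq_zero_or_pos a with rfl | ha
  · simp
  have hcount : countUpTo A N ≤ (2 * N / a) * (g + h) := by
    let windows := (Finset.Icc 1 (2 * N / a)).biUnion fun i => Finset.Ico (a * i - g) (a * i + h)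
    refine (countUpTo_le_card (F := windows) fun n hn hnA => ?_).trans
      ((Finset.card_biUnion_le_card_mul _ _ (g + h) fun i _ => ?_).trans ?_)
    · obtain ⟨i, hi, hlow, hupp⟩ := hA n hnA
      have hai : a ≤ a * i := Nat.le_mul_of_pos_right a hi
      refine Finset.mem_biUnion.mpr ⟨i, Finset.mem_Icc.mpr ⟨hi, ?_⟩, Finset.mem_Ico.mpr (by omega)⟩
      rw [Nat.le_div_iff_mul_le ha, mul_comm]
      omega
    · rw [Nat.card_Ico]
      omega
    · simp
  calc countUpTo A N * a ≤ (2 * N / a) * (g + h) * a := Nat.mul_le_mul_right a hcount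
    _ = (2 * N / a * a) * (g + h) := by ring
    _ ≤ 2 * N * (g + h) := Nat.mul_le_mul_right _ (Nat.div_mul_le_self _ _)

lemma countUpTo_iUnion_gt_le {A : ℕ → Set ℕ} (hA : ∀ q N, countUpTo (A q) N * 2 ^ q ≤ N)
    (r N : ℕ) : (countUpTo (⋃ q > r, A q) N : ℝ) ≤ (1 / 2) ^ r * (N + 1) := by
  have hcover : countUpTo (⋃ q > r, A q) N ≤
      countUpTo (⋃ i ∈ Finset.range N, A (r + 1 + i)) N := by
    refine countUpTo_mono fun n hn hnA => ?_
    obtain ⟨q, hq, hnq⟩ := Set.mem_iUnion₂.mp hnA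
    obtain ⟨i, rfl⟩ := Nat.exists_eq_add_of_le (Nat.succ_le_of_lt hq)
    have hpow : 2 ^ (r + 1 + i) ≤ N :=
      (Nat.le_mul_of_pos_left _ (countUpTo_pos hn hnq)).trans (hA _ N)
    have hlt : r + 1 + i < 2 ^ (r + 1 + i) := Nat.lt_two_pow_self
    exact Set.mem_iUnion₂.mpr ⟨i, Finset.mem_range.mpr (by omega), hnq⟩
  have hterm (i : ℕ) :
      (countUpTo (A (r + 1 + i)) N : ℝ) ≤ (1 / 2) ^ (r + 1) * (N + 1) * (1 / 2) ^ i := by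
    have h : (countUpTo (A (r + 1 + i)) N : ℝ) * 2 ^ (r + 1 + i) ≤ N := mod_cast hA _ N
    rw [mul_right_comm, ← pow_add, one_div, inv_pow, inv_mul_eq_div, le_div_iff₀ (by positivity)]
    linarith
  calc (countUpTo (⋃ q > r, A q) N : ℝ)
      ≤ ∑ i ∈ Finset.range N, (countUpTo (A (r + 1 + i)) N : ℝ) :=
        mod_cast hcover.trans (countUpTo_biUnion_le _ _ N)
    _ ≤ ∑ i ∈ Finset.range N, (1 / 2 : ℝ) ^ (r + 1) * (N + 1) * (1 / 2) ^ i :=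
        Finset.sum_le_sum fun i _ => hterm i
    _ = (1 / 2) ^ (r + 1) * (N + 1) * ∑ i ∈ Finset.range N, (1 / 2 : ℝ) ^ i := by
        rw [Finset.mul_sum]
    _ ≤ (1 / 2) ^ (r + 1) * (N + 1) * 2 :=
        mul_le_mul_of_nonneg_left (sum_geometric_two_le N) (by positivity)
    _ = (1 / 2) ^ r * (N + 1) := by ring

lemma upperDensity_le_of_eventually {δ : ℝ}
    (h : ∀ᶠ N : ℕ in atTop, (countUpTo A N : ℝ) ≤ δ * (N + 1)) : upperDensity A ≤ δ := by
  refine limsup_le_of_le (IsCoboundedUnder.of_frequently_ge (a := 0)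
    (Frequently.of_forall fun N => by positivity)) ?_
  filter_upwards [h] with N hN
  rwa [div_le_iff₀ (by positivity)]

lemma eventually_countUpTo_le_of_upperDensity_lt {δ : ℝ} (h : upperDensity A < δ) :
    ∀ᶠ N : ℕ in atTop, (countUpTo A N : ℝ) ≤ δ * (N + 1) := by
  have hbdd : IsBoundedUnder (· ≤ ·) atTop
      fun N : ℕ => (countUpTo A N : ℝ) / ((N : ℝ) + 1) := by
    refine isBoundedUnder_of ⟨1, fun N => div_le_one_of_le₀ ?_ (by positivity)⟩
    have : countUpTo A N ≤ (Finset.range (N + 1)).card := Finset.card_filter_le _ _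
    rw [Finset.card_range] at this
    exact_mod_cast this
  filter_upwards [eventually_lt_of_limsup_lt h hbdd] with N hN
  exact ((div_lt_iff₀ (by positivity)).mp hN).le

lemma upperDensity_le_of_finite_diff (h : (A \ B).Finite) : upperDensity A ≤ upperDensity B := by
  refine le_of_forall_pos_le_add fun ε hε => upperDensity_le_of_eventually ?_
  have hlarge : ∀ᶠ N : ℕ in atTop, (h.toFinset.card : ℝ) ≤ ε / 2 * N :=
    (tendsto_natCast_atTop_atTop.const_mul_atTop (half_pos hε)).eventually_ge_atTop _
  filter_upwards [hlarge, eventually_countUpTo_le_of_upperDensity_lt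
    (lt_add_of_pos_right (upperDensity B) (half_pos hε))] with N hN hB
  have hsplit : countUpTo A N ≤ countUpTo B N + h.toFinset.card :=
    calc countUpTo A N ≤ countUpTo (B ∪ A \ B) N :=
          countUpTo_mono fun n _ hn => by simpa using Or.inr hn
      _ ≤ countUpTo B N + countUpTo (A \ B) N := countUpTo_union_le _ _ _
      _ ≤ countUpTo B N + h.toFinset.card :=
          Nat.add_le_add_left (countUpTo_le_card fun n _ hn => h.mem_toFinset.mpr hn) _
  have hsplit' : (countUpTo A N : ℝ) ≤ countUpTo B N + h.toFinset.card := mod_cast hsplit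
  linarith

lemma succ_le_mul_card_filter_Icc {a m N : ℕ} (ha : 0 < a) (h : ∀ i ≤ N, m + a * i ∈ A) :
    N + 1 ≤ a * ((Finset.Icc m (m + N)).filter (fun n => n ∈ A)).card := by
  have hcard : (Finset.range (N / a + 1)).card ≤
      ((Finset.Icc m (m + N)).filter (fun n => n ∈ A)).card := by
    refine Finset.card_le_card_of_injOn (fun i => m + a * i) (fun i hi => ?_) fun i _ i' _ hii' =>
      Nat.eq_of_mul_eq_mul_left ha (Nat.add_left_cancel hii')
    have hi' : i ≤ N / a := Finset.mem_range_succ_iff.mp hi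
    have hle : a * i ≤ N := (Nat.mul_le_mul_left a hi').trans (Nat.mul_div_le N a)
    exact Finset.mem_filter.mpr
      ⟨Finset.mem_Icc.mpr ⟨Nat.le_add_right _ _, Nat.add_le_add_left hle m⟩,
        h i (hi'.trans (Nat.div_le_self N a))⟩
  rw [Finset.card_range] at hcard
  exact (Nat.lt_mul_div_succ N ha).trans_le (Nat.mul_le_mul_left a hcard)

lemma upperBanachDensity_pos_of_progressions {a : ℕ} (ha : 0 < a)
    (h : ∀ N, ∃ m, ∀ i ≤ N, m + a * i ∈ A) : 0 < upperBanachDensity A := by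
  refine lt_of_lt_of_le (show (0 : ℝ) < 1 / a by positivity) (le_ciInf fun N => ?_)
  obtain ⟨m, hm⟩ := h N
  have hbdd : BddAbove (Set.range fun m : ℕ =>
      (((Finset.Icc m (m + N)).filter (fun n => n ∈ A)).card : ℝ) / ((N : ℝ) + 1)) := by
    refine ⟨1, Set.forall_mem_range.mpr fun m => div_le_one_of_le₀ ?_ (by positivity)⟩
    have hcard := Finset.card_filter_le (Finset.Icc m (m + N)) (fun n => n ∈ A)
    rw [Nat.card_Icc, add_assoc, Nat.add_sub_cancel_left] at hcard
    exact_mod_cast hcard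
  refine le_trans ?_ (le_ciSup hbdd m)
  rw [div_le_div_iff₀ (by positivity) (by positivity), one_mul, mul_comm]
  exact_mod_cast succ_le_mul_card_filter_Icc ha hm

end Density

section Envelope

variable {E : ℕ → Set ℕ} {H : ℕ → ℕ} {m n k q r : ℕ}

/-- The points at distance at most `h` to the left of a point of `E`. -/
def leftThickening (E : Set ℕ) (h : ℕ) : Set ℕ :=
  {n | ∃ m ∈ E, n ≤ m ∧ m ≤ n + h}

lemma leftThickening_union (A B : Set ℕ) (h : ℕ) :
    leftThickening (A ∪ B) h = leftThickening A h ∪ leftThickening B h := by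
  ext n
  simp only [leftThickening, Set.mem_union, Set.mem_ofPred_eq, or_and_right, exists_or]

/-- The least function `u : ℕ → ℕ` with `u (n + 1) ≤ u n + 1` and `H q ≤ u m` for all `m ∈ E q`,
provided `H q ≤ m` for all such `m`: the supremum of `0` and of the left tents `H q - (m - n)`,
`n ≤ m`. The cut-off at `n` makes it finite for arbitrary data. -/
noncomputable def envelope (E : ℕ → Set ℕ) (H : ℕ → ℕ) (n : ℕ) : ℕ :=
  Nat.findGreatest (fun k => ∃ q, ∃ m ∈ E q, n ≤ m ∧ k + m ≤ n + H q) n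

lemma envelope_le_self (E : ℕ → Set ℕ) (H : ℕ → ℕ) (n : ℕ) : envelope E H n ≤ n :=
  Nat.findGreatest_le n

lemma exists_mem_of_envelope_ne_zero (h : envelope E H n ≠ 0) :
    ∃ q, ∃ m ∈ E q, n ≤ m ∧ envelope E H n + m ≤ n + H q :=
  Nat.findGreatest_of_ne_zero (P := fun k => ∃ q, ∃ m ∈ E q, n ≤ m ∧ k + m ≤ n + H q) rfl h

lemma envelope_succ_le (E : ℕ → Set ℕ) (H : ℕ → ℕ) (n : ℕ) :
    envelope E H (n + 1) ≤ envelope E H n + 1 := by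
  by_cases h0 : envelope E H (n + 1) = 0
  · omega
  obtain ⟨q, m, hm, hnm, hle⟩ := exists_mem_of_envelope_ne_zero h0
  have hn := envelope_le_self E H (n + 1)
  have : envelope E H (n + 1) - 1 ≤ envelope E H n :=
    Nat.le_findGreatest (by omega) ⟨q, m, hm, by omega, by omega⟩
  omega

lemma le_envelope (hm : m ∈ E q) (h : H q ≤ m) : H q ≤ envelope E H m :=
  Nat.le_findGreatest h ⟨q, m, hm, le_rfl, by omega⟩

lemma mem_leftThickening_of_lt_envelope (hH : Monotone H) (h : H r < envelope E H n) :
    n ∈ ⋃ q > r, leftThickening (E q) (H q) := by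
  obtain ⟨q, m, hm, hnm, hle⟩ := exists_mem_of_envelope_ne_zero (Nat.ne_zero_of_lt h)
  have hq : H r < H q := by omega
  exact Set.mem_iUnion₂.mpr ⟨q, hH.reflect_lt hq, m, hm, hnm, by omega⟩

lemma upperDensity_lt_envelope_le (hH : Monotone H)
    (hE : ∀ q N, countUpTo (leftThickening (E q) (H q)) N * 2 ^ q ≤ N) (r : ℕ) :
    upperDensity {n | H r < envelope E H n} ≤ (1 / 2) ^ r :=
  upperDensity_le_of_eventually <| Eventually.of_forall fun N => le_trans
    (mod_cast countUpTo_mono fun _ _ => mem_leftThickening_of_lt_envelope hH)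
    (countUpTo_iUnion_gt_le hE r N)

end Envelope

section Blocks

variable {s : ℕ → ℕ} {j q N : ℕ}

/-- The index of the vector approximated in block `j`; every index is used for infinitely many
blocks. -/
def target (j : ℕ) : ℕ :=
  j.unpair.1

/-- The height of the peaks of level `q`, where `s q` bounds the size of the target of index `q`:
the `2 * s q` outweighs the entries of the target, the `q` bounds the remaining error by
`‖c‖⁻¹ ^ q`. -/
def height (s : ℕ → ℕ) (q : ℕ) : ℕ :=
  2 * s q + q

/-- The distance between consecutive copies of the target of index `q` inside a block. -/
def period (s : ℕ → ℕ) (q : ℕ) : ℕ :=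
  2 ^ (q + 2) * (height s q + s q + 1)

/-- A bound for the length of block `j`, which consists of `j` copies of its target. -/
def blockLength (s : ℕ → ℕ) (j : ℕ) : ℕ :=
  period s (target j) * j + s j

/-- The starting point of block `j` if the preceding blocks end before `p`: so far away that the
differences of positions in block `j` and in `[0, p]` have small density. -/
def blockStartAfter (s : ℕ → ℕ) (j p : ℕ) : ℕ :=
  (p + height s j + blockLength s j + 1) * (1 + 2 ^ (j + 1))

/-- The end of the blocks of index less than `j`. -/
def prevEnd (s : ℕ → ℕ) : ℕ → ℕ
  | 0 => 0
  | j + 1 => blockStartAfter s j (prevEnd s j) + blockLength s j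

/-- The first position of block `j`. -/
def blockStart (s : ℕ → ℕ) (j : ℕ) : ℕ :=
  blockStartAfter s j (prevEnd s j)

/-- The differences between a coordinate of a copy of the target of index `q` and the start of an
earlier copy in the same block. -/
def progressionPeaks (s : ℕ → ℕ) (q : ℕ) : Set ℕ :=
  {m | ∃ i k, 1 ≤ i ∧ k < s q ∧ m = period s q * i + k}

/-- An interval containing the coordinates in block `q` and their differences with the coordinates
in the preceding blocks. -/
def blockPeaks (s : ℕ → ℕ) (q : ℕ) : Set ℕ :=
  Set.Icc (blockStart s q - prevEnd s q) (blockStart s q + blockLength s q)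

/-- The positions where the exponent of the weight product is required to be at least
`height s q`. -/
def peakSet (s : ℕ → ℕ) (q : ℕ) : Set ℕ :=
  progressionPeaks s q ∪ blockPeaks s q

/-- The exponent `u` such that the product of the first `n` weights is `c ^ u n`. -/
noncomputable def exponent (s : ℕ → ℕ) : ℕ → ℕ :=
  envelope (peakSet s) (height s)

lemma target_le (j : ℕ) : target j ≤ j :=
  Nat.unpair_left_le j

lemma monotone_height (hs : Monotone s) : Monotone (height s) :=
  fun _ _ h => Nat.add_le_add (Nat.mul_le_mul_left 2 (hs h)) h

lemma four_mul_le_period (s : ℕ → ℕ) (q : ℕ) : 4 * (height s q + s q + 1) ≤ period s q :=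
  Nat.mul_le_mul_right _ (show 2 ^ 2 ≤ 2 ^ (q + 2) from
    Nat.pow_le_pow_right two_pos (Nat.le_add_left 2 q))

lemma period_pos (s : ℕ → ℕ) (q : ℕ) : 0 < period s q :=
  lt_of_lt_of_le (by omega) (four_mul_le_period s q)

lemma add_lt_blockStart (s : ℕ → ℕ) (j : ℕ) :
    prevEnd s j + height s j + blockLength s j < blockStart s j :=
  Nat.le_mul_of_pos_right _ (Nat.add_pos_left one_pos _)

lemma monotone_prevEnd (s : ℕ → ℕ) : Monotone (prevEnd s) :=
  monotone_nat_of_le_succ fun j =>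
    (show prevEnd s j ≤ blockStart s j by have := add_lt_blockStart s j; omega).trans
      (Nat.le_add_right _ _)

lemma blockEnd_le_prevEnd {j' : ℕ} (h : j < j') : blockStart s j + blockLength s j ≤ prevEnd s j' :=
  monotone_prevEnd s (Nat.succ_le_of_lt h)

lemma height_le_of_mem_peakSet {m : ℕ} (hm : m ∈ peakSet s q) : height s q ≤ m := by
  rcases hm with ⟨i, k, hi, -, rfl⟩ | ⟨hlow, -⟩
  · have := four_mul_le_period s q
    have := Nat.le_mul_of_pos_right (period s q) hi
    omega
  · have := add_lt_blockStart s q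
    omega

lemma height_le_exponent {m : ℕ} (hm : m ∈ peakSet s q) : height s q ≤ exponent s m :=
  le_envelope hm (height_le_of_mem_peakSet hm)

lemma countUpTo_leftThickening_progressionPeaks (s : ℕ → ℕ) (q N : ℕ) :
    countUpTo (leftThickening (progressionPeaks s q) (height s q)) N * 2 ^ (q + 1) ≤ N := by
  set C := countUpTo (leftThickening (progressionPeaks s q) (height s q)) N
  have hwindows : C * period s q ≤ 2 * N * (height s q + s q) := by
    refine countUpTo_mul_le_of_mem_windows (by have := four_mul_le_period s q; omega) ?_ N
    rintro n ⟨m, ⟨i, k, hi, hk, rfl⟩, hnm, hmn⟩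
    exact ⟨i, hi, by omega, by omega⟩
  refine Nat.le_of_mul_le_mul_right ?_ (show 0 < 2 * (height s q + s q + 1) by omega)
  calc C * 2 ^ (q + 1) * (2 * (height s q + s q + 1)) = C * period s q := by rw [period]; ring
    _ ≤ 2 * N * (height s q + s q) := hwindows
    _ ≤ 2 * N * (height s q + s q + 1) := Nat.mul_le_mul_left _ (Nat.le_succ _)
    _ = N * (2 * (height s q + s q + 1)) := by ring

lemma countUpTo_leftThickening_blockPeaks (s : ℕ → ℕ) (q N : ℕ) :
    countUpTo (leftThickening (blockPeaks s q) (height s q)) N * 2 ^ (q + 1) ≤ N := by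
  have hlt := add_lt_blockStart s q
  refine countUpTo_mul_le_of_subset_Icc (l := blockStart s q - prevEnd s q - height s q)
    (r := blockStart s q + blockLength s q) ?_ ?_ N
  · rintro n ⟨m, ⟨hlow, hupp⟩, hnm, hmn⟩
    exact ⟨by omega, by omega⟩
  · have hlen : blockStart s q + blockLength s q + 1 - (blockStart s q - prevEnd s q - height s q) =
        prevEnd s q + height s q + blockLength s q + 1 := by omega
    have hstart : blockStart s q = (prevEnd s q + height s q + blockLength s q + 1) +
        (prevEnd s q + height s q + blockLength s q + 1) * 2 ^ (q + 1) := by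
      rw [blockStart, blockStartAfter]
      ring
    rw [hlen]
    omega

lemma countUpTo_leftThickening_peakSet (s : ℕ → ℕ) (q N : ℕ) :
    countUpTo (leftThickening (peakSet s q) (height s q)) N * 2 ^ q ≤ N := by
  have hunion := Nat.mul_le_mul_right (2 ^ q) (countUpTo_union_le
    (leftThickening (progressionPeaks s q) (height s q))
    (leftThickening (blockPeaks s q) (height s q)) N)
  have hprog := countUpTo_leftThickening_progressionPeaks s q N
  have hblock := countUpTo_leftThickening_blockPeaks s q N
  rw [← leftThickening_union, add_mul] at hunion
  rw [pow_succ, ← mul_assoc] at hprog hblock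
  rw [peakSet]
  omega

lemma upperDensity_lt_exponent_le (hs : Monotone s) (r : ℕ) :
    upperDensity {n | height s r < exponent s n} ≤ (1 / 2) ^ r :=
  upperDensity_lt_envelope_le (monotone_height hs) (countUpTo_leftThickening_peakSet s) r

/-- A coordinate of a copy of a target: coordinate `offset` of the copy number `copy` in block
`block`. -/
@[ext]
structure Slot (s : ℕ → ℕ) where
  block : ℕ
  copy : ℕ
  offset : ℕ
  copy_lt : copy < block
  offset_lt : offset < s (target block)

namespace Slot

/-- The coordinate of the universal vector which the slot occupies. -/
def position (σ : Slot s) : ℕ :=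
  blockStart s σ.block + period s (target σ.block) * σ.copy + σ.offset

lemma blockStart_le_position (σ : Slot s) : blockStart s σ.block ≤ σ.position := by
  rw [position]
  omega

lemma position_lt (hs : Monotone s) (σ : Slot s) :
    σ.position < blockStart s σ.block + blockLength s σ.block := by
  have hoffset : s (target σ.block) ≤ s σ.block := hs (target_le _)
  have hcopy := Nat.mul_le_mul_left (period s (target σ.block)) σ.copy_lt.le
  have := σ.offset_lt
  rw [position, blockLength]
  omega

lemma block_eq_of_position_eq (hs : Monotone s) {σ τ : Slot s} (h : σ.position = τ.position) :
    σ.block = τ.block := by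
  have blocks_disjoint : ∀ σ τ : Slot s, σ.block < τ.block → σ.position < τ.position :=
    fun σ τ hlt => calc
      σ.position < blockStart s σ.block + blockLength s σ.block := σ.position_lt hs
      _ ≤ prevEnd s τ.block := blockEnd_le_prevEnd hlt
      _ ≤ blockStart s τ.block := by have := add_lt_blockStart s τ.block; omega
      _ ≤ τ.position := τ.blockStart_le_position
  rcases lt_trichotomy σ.block τ.block with hlt | heq | hlt
  · exact absurd h (blocks_disjoint σ τ hlt).ne
  · exact heq
  · exact absurd h (blocks_disjoint τ σ hlt).ne'

lemma position_injective (hs : Monotone s) : Function.Injective (position (s := s)) := by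
  intro σ τ h
  have hblock := block_eq_of_position_eq hs h
  have hσ := σ.offset_lt
  have hτ := τ.offset_lt
  rw [position, position, hblock, add_assoc, add_assoc, Nat.add_left_cancel_iff] at h
  rw [hblock] at hσ
  have hperiod := four_mul_le_period s (target τ.block)
  have hσ' := (Nat.div_mod_unique (period_pos s (target τ.block))).mpr
    ⟨(add_comm _ _).trans h, show σ.offset < _ by omega⟩
  have hτ' := (Nat.div_mod_unique (period_pos s (target τ.block))).mpr
    ⟨add_comm _ (_ * τ.copy), show τ.offset < _ by omega⟩
  exact Slot.ext hblock (hσ'.1.symm.trans hτ'.1) (hσ'.2.symm.trans hτ'.2)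

lemma height_block_le_exponent_position (hs : Monotone s) (σ : Slot s) :
    height s σ.block ≤ exponent s σ.position :=
  height_le_exponent <| Or.inr
    ⟨(Nat.sub_le _ _).trans σ.blockStart_le_position, (σ.position_lt hs).le⟩

lemma add_le_exponent_of_position_eq (hs : Monotone s) {i l : ℕ} (σ : Slot s) (hi : i < j)
    (hl : s (target j) ≤ l) (h : σ.position = blockStart s j + period s (target j) * i + l) :
    target j + 2 * s (target σ.block) ≤ exponent s l := by
  have hlow := σ.blockStart_le_position
  have hupp := σ.position_lt hs
  rcases lt_trichotomy σ.block j with hlt | rfl | hlt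
  · have := blockEnd_le_prevEnd (s := s) hlt
    have := add_lt_blockStart s j
    omega
  · have hcopy : i < σ.copy := by
      by_contra! hle
      have := Nat.mul_le_mul_left (period s (target σ.block)) hle
      have := σ.offset_lt
      rw [position] at h
      omega
    obtain ⟨d, hd⟩ := Nat.exists_eq_add_of_lt hcopy
    have hpeak : l = period s (target σ.block) * (d + 1) + σ.offset := by
      rw [position, hd, add_assoc i, mul_add] at h
      omega
    rw [add_comm]
    exact height_le_exponent (Or.inl ⟨d + 1, σ.offset, Nat.le_add_left 1 d, σ.offset_lt, hpeak⟩)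
  · have hend := blockEnd_le_prevEnd (s := s) hlt
    have hcopy := Nat.mul_le_mul_left (period s (target j)) hi.le
    have hlen : blockLength s j = period s (target j) * j + s j := rfl
    have hpeak : height s σ.block ≤ exponent s l :=
      height_le_exponent (Or.inr ⟨by omega, by omega⟩)
    have hsize : s (target σ.block) ≤ s σ.block := hs (target_le _)
    have htarget := target_le j
    rw [height] at hpeak
    omega

end Slot

end Blocks

section Hypercyclicity

variable {X : Type*} [TopologicalSpace X]

/-- Reiterative hypercyclicity: some orbit visits every nonempty open set along a set of times of
positive upper Banach density. -/
def IsReiterativelyHypercyclic (T : X → X) : Prop :=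
  ∃ x, ∀ U : Set X, IsOpen U → U.Nonempty → 0 < upperBanachDensity {n | T^[n] x ∈ U}

/-- Upper frequent hypercyclicity: some orbit visits every nonempty open set along a set of times of
positive upper density. -/
def IsUpperFrequentlyHypercyclic (T : X → X) : Prop :=
  ∃ x, ∀ U : Set X, IsOpen U → U.Nonempty → 0 < upperDensity {n | T^[n] x ∈ U}

end Hypercyclicity

section NullSequences

variable {E : Type*} [SeminormedAddCommGroup E]

/-- A sequence tending to zero, as an element of `C₀(ℕ, E)`. -/
def nullSequence (f : ℕ → E) (hf : Tendsto f atTop (𝓝 0)) : C₀(ℕ, E) where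
  toFun := f
  continuous_toFun := continuous_of_discreteTopology
  zero_at_infty' := by rwa [cocompact_eq_atTop]

lemma tendsto_apply_atTop (x : C₀(ℕ, E)) : Tendsto x atTop (𝓝 0) :=
  cocompact_eq_atTop (α := ℕ) ▸ x.zero_at_infty'

lemma c₀_norm_le {x : C₀(ℕ, E)} {M : ℝ} (hM : 0 ≤ M) : ‖x‖ ≤ M ↔ ∀ n, ‖x n‖ ≤ M :=
  BoundedContinuousFunction.norm_le (f := x.toBCF) hM

lemma norm_apply_le (x : C₀(ℕ, E)) (n : ℕ) : ‖x n‖ ≤ ‖x‖ :=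
  x.toBCF.norm_coe_le_norm n

lemma lipschitzWith_apply (n : ℕ) : LipschitzWith 1 fun x : C₀(ℕ, E) => x n :=
  LipschitzWith.of_dist_le_mul fun x y => by
    simpa only [NNReal.coe_one, one_mul, dist_eq_norm, ZeroAtInftyContinuousMap.sub_apply]
      using norm_apply_le (x - y) n

lemma exists_denseRange_finitelySupported (E : Type*) [SeminormedAddCommGroup E]
    [TopologicalSpace.SeparableSpace E] :
    ∃ y : ℕ → C₀(ℕ, E), DenseRange y ∧ ∀ q, ∀ᶠ n in atTop, y q n = 0 := by
  let d := TopologicalSpace.denseSeq E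
  let entry : ℕ → ℕ → E := fun q n => ((Denumerable.ofNat (List ℕ) q).map d).getD n 0
  have hsupp (q : ℕ) : entry q =ᶠ[atTop] fun _ => 0 := by
    filter_upwards [eventually_ge_atTop (Denumerable.ofNat (List ℕ) q).length] with n hn
    exact List.getD_eq_default _ _ (by simpa only [List.length_map] using hn)
  refine ⟨fun q => nullSequence (entry q) (tendsto_const_nhds.congr' (hsupp q).symm),
    Metric.denseRange_iff.mpr fun z ε hε => ?_, hsupp⟩
  obtain ⟨n, hn⟩ := Metric.tendsto_atTop.mp (tendsto_apply_atTop z) (ε / 2) (half_pos hε)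
  choose f hf using fun k =>
    (TopologicalSpace.denseRange_denseSeq E).exists_dist_lt (z k) (half_pos hε)
  refine ⟨Encodable.encode ((List.range n).map f), ?_⟩
  rw [dist_eq_norm]
  refine lt_of_le_of_lt ((c₀_norm_le (half_pos hε).le).mpr fun k => ?_) (half_lt_self hε)
  rw [ZeroAtInftyContinuousMap.sub_apply, ← dist_eq_norm]
  change dist (z k) (entry _ k) ≤ ε / 2
  simp only [entry, Denumerable.ofNat_encode, List.map_map]
  rcases lt_or_ge k n with hk | hk
  · simpa [List.getD_eq_getElem?_getD, hk] using (hf k).le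
  · simpa [List.getD_eq_getElem?_getD, hk] using (hn k hk).le

end NullSequences

section WeightedShift

variable {𝕜 : Type*} [NormedField 𝕜] {v w : ℕ → 𝕜} {C : ℝ}

lemma norm_mul_succ_le (hw : ∀ n, ‖w n‖ ≤ C) (x : ℕ → 𝕜) (n : ℕ) :
    ‖w (n + 1) * x (n + 1)‖ ≤ C * ‖x (n + 1)‖ :=
  (norm_mul_le _ _).trans (mul_le_mul_of_nonneg_right (hw _) (norm_nonneg _))

lemma tendsto_mul_succ (hw : ∀ n, ‖w n‖ ≤ C) (x : C₀(ℕ, 𝕜)) :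
    Tendsto (fun n => w (n + 1) * x (n + 1)) atTop (𝓝 0) :=
  squeeze_zero_norm (norm_mul_succ_le hw x) <| by
    simpa using ((tendsto_add_atTop_iff_nat 1).mpr (tendsto_apply_atTop x)).norm.const_mul C

/-- The weighted backward shift `(x₀, x₁, …) ↦ (w₁ x₁, w₂ x₂, …)` on `c₀`. -/
noncomputable def weightedBackwardShift (w : ℕ → 𝕜) (hw : ∀ n, ‖w n‖ ≤ C) :
    C₀(ℕ, 𝕜) →L[𝕜] C₀(ℕ, 𝕜) :=
  LinearMap.mkContinuous
    { toFun := fun x => nullSequence _ (tendsto_mul_succ hw x)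
      map_add' := fun x y => ZeroAtInftyContinuousMap.ext fun n => mul_add _ (x _) (y _)
      map_smul' := fun a x => ZeroAtInftyContinuousMap.ext fun n => mul_left_comm _ a (x _) }
    C fun x => by
      have hC : 0 ≤ C := (norm_nonneg _).trans (hw 0)
      refine (c₀_norm_le (mul_nonneg hC (norm_nonneg x))).mpr fun n => ?_
      exact (norm_mul_succ_le hw x n).trans (mul_le_mul_of_nonneg_left (norm_apply_le x _) hC)

lemma weightedBackwardShift_apply (hw : ∀ n, ‖w n‖ ≤ C) (x : C₀(ℕ, 𝕜)) (n : ℕ) :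
    weightedBackwardShift w hw x n = w (n + 1) * x (n + 1) :=
  rfl

/-- The weights `w` with products `w₁ ⋯ wₙ = v n / v 0`; as `0 - 1 = 0`, the unused weight `w₀` is
`v 0 / v 0`. -/
noncomputable def weightOfProduct (v : ℕ → 𝕜) (n : ℕ) : 𝕜 :=
  v n / v (n - 1)

lemma iterate_weightedBackwardShift_apply (hv : ∀ n, v n ≠ 0)
    (hw : ∀ n, ‖weightOfProduct v n‖ ≤ C) (n : ℕ) (x : C₀(ℕ, 𝕜)) (l : ℕ) :
    (weightedBackwardShift _ hw)^[n] x l = v (n + l) / v l * x (n + l) := by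
  induction n generalizing x with
  | zero => simp [hv]
  | succ n ih =>
    rw [Function.iterate_succ_apply, ih, weightedBackwardShift_apply, weightOfProduct,
      Nat.add_sub_cancel, add_right_comm]
    have := hv (n + l)
    have := hv l
    field_simp

lemma finite_one_lt_norm_iterate_diff (hv : ∀ n, v n ≠ 0) (hw : ∀ n, ‖weightOfProduct v n‖ ≤ C)
    (x : C₀(ℕ, 𝕜)) (R : ℝ) :
    ({n | 1 < ‖(weightedBackwardShift _ hw)^[n] x 0‖} \ {n | R < ‖v n‖}).Finite := by
  have hsmall : ∀ᶠ n in atTop, R * ‖x n‖ < ‖v 0‖ := by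
    have := (tendsto_apply_atTop x).norm.const_mul R
    rw [norm_zero, mul_zero] at this
    exact this.eventually_lt_const (norm_pos_iff.mpr (hv 0))
  have hexcluded : ∀ᶠ n in atTop,
      n ∉ {n | 1 < ‖(weightedBackwardShift _ hw)^[n] x 0‖} \ {n | R < ‖v n‖} := by
    filter_upwards [hsmall] with n hn ⟨hlarge, hvn⟩
    rw [Set.mem_ofPred_eq, iterate_weightedBackwardShift_apply hv, norm_mul, norm_div, add_zero,
      div_mul_eq_mul_div, one_lt_div (norm_pos_iff.mpr (hv 0))] at hlarge
    exact (hlarge.trans_le (mul_le_mul_of_nonneg_right (not_lt.mp hvn) (norm_nonneg _))).not_gt hn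
  rw [← Nat.cofinite_eq_atTop, eventually_cofinite] at hexcluded
  simpa only [not_not, Set.ofPred_mem_eq] using hexcluded

end WeightedShift

section NotUpperFrequentlyHypercyclic

variable {𝕜 : Type*} [NontriviallyNormedField 𝕜] {v : ℕ → 𝕜} {C : ℝ}

theorem not_isUpperFrequentlyHypercyclic_weightedBackwardShift (hv : ∀ n, v n ≠ 0)
    (hw : ∀ n, ‖weightOfProduct v n‖ ≤ C)
    (hdensity : ∀ ε > 0, ∃ R, upperDensity {n | R < ‖v n‖} ≤ ε) :
    ¬ IsUpperFrequentlyHypercyclic (weightedBackwardShift _ hw) := by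
  rintro ⟨x, hx⟩
  have hopen : IsOpen {z : C₀(ℕ, 𝕜) | 1 < ‖z 0‖} :=
    isOpen_lt continuous_const (lipschitzWith_apply 0).continuous.norm
  obtain ⟨c, hc⟩ := NormedField.exists_one_lt_norm 𝕜
  have hsingle : Tendsto (Pi.single 0 c : ℕ → 𝕜) atTop (𝓝 0) :=
    tendsto_const_nhds.congr' <| (eventually_ne_atTop 0).mono fun n hn =>
      (Pi.single_eq_of_ne (M := fun _ => 𝕜) hn c).symm
  have hne : {z : C₀(ℕ, 𝕜) | 1 < ‖z 0‖}.Nonempty :=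
    ⟨nullSequence _ hsingle, by
      simpa only [Set.mem_ofPred_eq, nullSequence, ZeroAtInftyContinuousMap.coe_mk,
        Pi.single_eq_same] using hc⟩
  refine (hx _ hopen hne).not_ge (le_of_forall_pos_le_add fun ε hε => ?_)
  obtain ⟨R, hR⟩ := hdensity ε hε
  rw [zero_add]
  exact (upperDensity_le_of_finite_diff (finite_one_lt_norm_iterate_diff hv hw x R)).trans hR

end NotUpperFrequentlyHypercyclic

section PositiveCriterion

variable {𝕜 : Type*} [NormedField 𝕜] {c : 𝕜}

/-- A sequence visiting every ball of `c₀` infinitely often, whose `q`-th term is supported in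
`[0, size q)` and has norm at most `‖c‖ ^ size q`. -/
structure TargetSequence (c : 𝕜) where
  vector : ℕ → C₀(ℕ, 𝕜)
  size : ℕ → ℕ
  monotone_size : Monotone size
  apply_eq_zero : ∀ q k, size q ≤ k → vector q k = 0
  norm_le : ∀ q, ‖vector q‖ ≤ ‖c‖ ^ size q
  frequently_dist_lt : ∀ z : C₀(ℕ, 𝕜), ∀ ε > 0, ∃ᶠ q in atTop, dist (vector q) z < ε

lemma nonempty_targetSequence [TopologicalSpace.SeparableSpace 𝕜] (hc : 1 < ‖c‖) :
    Nonempty (TargetSequence c) := by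
  obtain ⟨y, hdense, hsupp⟩ := exists_denseRange_finitelySupported 𝕜
  obtain ⟨size, hsize, hbound⟩ := extraction_forall_of_eventually
    (P := fun q n => (∀ k ≥ n, y q.unpair.1 k = 0) ∧ ‖y q.unpair.1‖ ≤ ‖c‖ ^ n) fun q =>
    (eventually_forall_ge_atTop.mpr (hsupp q.unpair.1)).and
      ((tendsto_pow_atTop_atTop_of_one_lt hc).eventually_ge_atTop _)
  refine ⟨⟨fun q => y q.unpair.1, size, hsize.monotone, fun q => (hbound q).1,
    fun q => (hbound q).2, fun z ε hε => frequently_atTop.mpr fun N => ?_⟩⟩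
  obtain ⟨i, hi⟩ := hdense.exists_dist_lt z hε
  refine ⟨Nat.pair i N, Nat.right_le_pair i N, ?_⟩
  rwa [Nat.unpair_pair, dist_comm]

lemma norm_pow_div_pow_mul_le (hc : 1 < ‖c‖) {y : 𝕜} {a e f p : ℕ} (hy : ‖y‖ ≤ ‖c‖ ^ a)
    (he : e ≤ a) (hf : p + 2 * a ≤ f) : ‖c ^ e / c ^ f * y‖ ≤ ‖c‖⁻¹ ^ p := by
  have hc0 : 0 < ‖c‖ := one_pos.trans hc
  rw [norm_mul, norm_div, norm_pow, norm_pow, inv_pow, div_mul_eq_mul_div, ← one_div,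
    div_le_div_iff₀ (pow_pos hc0 f) (pow_pos hc0 p), one_mul]
  calc ‖c‖ ^ e * ‖y‖ * ‖c‖ ^ p ≤ ‖c‖ ^ a * ‖c‖ ^ a * ‖c‖ ^ p := by
        gcongr
        exact hc.le
    _ = ‖c‖ ^ (p + 2 * a) := by ring
    _ ≤ ‖c‖ ^ f := pow_le_pow_right₀ hc.le hf

lemma norm_weightOfProduct_pow_le (hc : 1 < ‖c‖) {u : ℕ → ℕ} (hu : ∀ n, u (n + 1) ≤ u n + 1)
    (n : ℕ) : ‖weightOfProduct (fun n => c ^ u n) n‖ ≤ ‖c‖ := by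
  have hc0 : 0 < ‖c‖ := one_pos.trans hc
  rw [weightOfProduct, norm_div, norm_pow, norm_pow, div_le_iff₀ (pow_pos hc0 _), ← pow_succ']
  refine pow_le_pow_right₀ hc.le ?_
  cases n with
  | zero => exact Nat.le_succ _
  | succ n => exact hu n

lemma exists_upperDensity_lt_norm_pow_exponent_le (hc : 1 < ‖c‖) {s : ℕ → ℕ} (hs : Monotone s)
    {ε : ℝ} (hε : 0 < ε) : ∃ R, upperDensity {n | R < ‖c ^ exponent s n‖} ≤ ε := by
  obtain ⟨r, hr⟩ := exists_pow_lt_of_lt_one hε one_half_lt_one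
  refine ⟨‖c‖ ^ height s r, ?_⟩
  simp only [norm_pow, pow_lt_pow_iff_right₀ hc]
  exact (upperDensity_lt_exponent_le hs r).trans hr.le

namespace TargetSequence

variable (t : TargetSequence c)

/-- The entry of the universal vector at the position of a slot, chosen such that the shift by
`position - offset` maps it to the coordinate `offset` of the target. -/
noncomputable def slotEntry (σ : Slot t.size) : 𝕜 :=
  c ^ exponent t.size σ.offset / c ^ exponent t.size σ.position *
    t.vector (target σ.block) σ.offset

/-- The coordinates of the universal vector: the entries of the slots, and zero elsewhere. -/
noncomputable def universalEntry : ℕ → 𝕜 :=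
  Function.extend Slot.position t.slotEntry 0

lemma norm_vector_apply_le (q k : ℕ) : ‖t.vector q k‖ ≤ ‖c‖ ^ t.size q :=
  (norm_apply_le _ _).trans (t.norm_le q)

lemma exponent_offset_le (σ : Slot t.size) :
    exponent t.size σ.offset ≤ t.size (target σ.block) :=
  (envelope_le_self _ _ _).trans σ.offset_lt.le

lemma norm_slotEntry_le (hc : 1 < ‖c‖) (σ : Slot t.size) :
    ‖t.slotEntry σ‖ ≤ ‖c‖⁻¹ ^ σ.block := by
  refine norm_pow_div_pow_mul_le hc (t.norm_vector_apply_le _ _) (t.exponent_offset_le σ) ?_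
  have hheight := σ.height_block_le_exponent_position t.monotone_size
  have hsize := t.monotone_size (target_le σ.block)
  rw [height] at hheight
  omega

lemma universalEntry_position (σ : Slot t.size) : t.universalEntry σ.position = t.slotEntry σ :=
  (Slot.position_injective t.monotone_size).extend_apply _ _ σ

lemma universalEntry_eq_zero {n : ℕ} (hn : ¬ ∃ σ : Slot t.size, σ.position = n) :
    t.universalEntry n = 0 :=
  Function.extend_apply' _ _ _ hn

lemma tendsto_universalEntry (hc : 1 < ‖c‖) : Tendsto t.universalEntry atTop (𝓝 0) := by
  refine Metric.tendsto_atTop.mpr fun ε hε => ?_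
  obtain ⟨b, hb⟩ := exists_pow_lt_of_lt_one hε (inv_lt_one_of_one_lt₀ hc)
  refine ⟨prevEnd t.size b, fun n hn => ?_⟩
  rw [dist_zero_right]
  by_cases hslot : ∃ σ : Slot t.size, σ.position = n
  · obtain ⟨σ, rfl⟩ := hslot
    have hblock : b ≤ σ.block := by
      by_contra! hlt
      have := σ.position_lt t.monotone_size
      have := blockEnd_le_prevEnd (s := t.size) hlt
      omega
    rw [universalEntry_position]
    calc ‖t.slotEntry σ‖ ≤ ‖c‖⁻¹ ^ σ.block := t.norm_slotEntry_le hc σ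
      _ ≤ ‖c‖⁻¹ ^ b := pow_le_pow_of_le_one (by positivity) (inv_le_one_of_one_le₀ hc.le) hblock
      _ < ε := hb
  · rwa [t.universalEntry_eq_zero hslot, norm_zero]

/-- The vector whose orbit under the weighted backward shift with products `c ^ exponent t.size n`
visits each ball along arbitrarily long arithmetic progressions of fixed difference. -/
noncomputable def universalVector (hc : 1 < ‖c‖) : C₀(ℕ, 𝕜) :=
  nullSequence t.universalEntry (t.tendsto_universalEntry hc)

variable {t} {C : ℝ} {i j : ℕ}

lemma norm_mul_universalEntry_sub_le (hc : 1 < ‖c‖) (hi : i < j) (l : ℕ) :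
    ‖c ^ exponent t.size (blockStart t.size j + period t.size (target j) * i + l) /
          c ^ exponent t.size l *
        t.universalEntry (blockStart t.size j + period t.size (target j) * i + l) -
      t.vector (target j) l‖ ≤ ‖c‖⁻¹ ^ target j := by
  have hpow (n : ℕ) : c ^ n ≠ 0 := pow_ne_zero n (norm_pos_iff.mp (one_pos.trans hc))
  rcases lt_or_ge l (t.size (target j)) with hl | hl
  · have hentry := t.universalEntry_position ⟨j, i, l, hi, hl⟩
    rw [Slot.position, slotEntry, Slot.position] at hentry
    rw [hentry, ← mul_assoc, div_mul_div_cancel₀ (hpow _), div_self (hpow _), one_mul, sub_self,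
      norm_zero]
    positivity
  rw [t.apply_eq_zero _ _ hl, sub_zero]
  by_cases hslot : ∃ σ : Slot t.size,
      σ.position = blockStart t.size j + period t.size (target j) * i + l
  · obtain ⟨σ, hσ⟩ := hslot
    rw [← hσ, universalEntry_position, slotEntry, ← mul_assoc, div_mul_div_comm,
      mul_comm (c ^ exponent t.size l), mul_div_mul_left _ _ (hpow _)]
    exact norm_pow_div_pow_mul_le hc (t.norm_vector_apply_le _ _) (t.exponent_offset_le σ)
      (σ.add_le_exponent_of_position_eq t.monotone_size hi hl hσ)
  · rw [t.universalEntry_eq_zero hslot, mul_zero, norm_zero]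
    positivity

lemma dist_iterate_universalVector_le (hc : 1 < ‖c‖)
    (hw : ∀ n, ‖weightOfProduct (fun n => c ^ exponent t.size n) n‖ ≤ C) (hi : i < j) :
    dist ((weightedBackwardShift _ hw)^[blockStart t.size j + period t.size (target j) * i]
      (t.universalVector hc)) (t.vector (target j)) ≤ ‖c‖⁻¹ ^ target j := by
  have hv (n : ℕ) : c ^ exponent t.size n ≠ 0 :=
    pow_ne_zero _ (norm_pos_iff.mp (one_pos.trans hc))
  rw [dist_eq_norm, c₀_norm_le (by positivity)]
  intro l
  rw [ZeroAtInftyContinuousMap.sub_apply, iterate_weightedBackwardShift_apply hv]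
  exact norm_mul_universalEntry_sub_le hc hi l

theorem isReiterativelyHypercyclic (t : TargetSequence c) (hc : 1 < ‖c‖)
    (hw : ∀ n, ‖weightOfProduct (fun n => c ^ exponent t.size n) n‖ ≤ C) :
    IsReiterativelyHypercyclic (weightedBackwardShift _ hw) := by
  refine ⟨t.universalVector hc, fun U hU ⟨z, hz⟩ => ?_⟩
  obtain ⟨ε, hε, hball⟩ := Metric.isOpen_iff.mp hU z hz
  have hsmall : ∀ᶠ q in atTop, ‖c‖⁻¹ ^ q < ε / 2 :=
    (tendsto_pow_atTop_nhds_zero_of_lt_one (by positivity)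
      (inv_lt_one_of_one_lt₀ hc)).eventually_lt_const (half_pos hε)
  obtain ⟨q, hclose, herror⟩ :=
    ((t.frequently_dist_lt z (ε / 2) (half_pos hε)).and_eventually hsmall).exists
  refine upperBanachDensity_pos_of_progressions (period_pos t.size q) fun N => ?_
  have htarget : target (Nat.pair q (N + 1)) = q := by rw [target, Nat.unpair_pair]
  refine ⟨blockStart t.size (Nat.pair q (N + 1)), fun i hi => hball ?_⟩
  have hcopy : i < Nat.pair q (N + 1) :=
    (Nat.lt_succ_of_le hi).trans_le (Nat.right_le_pair q (N + 1))
  have happrox := dist_iterate_universalVector_le hc hw hcopy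
  rw [htarget] at happrox
  exact (dist_triangle _ _ _).trans_lt ((add_lt_add (happrox.trans_lt herror) hclose).trans_eq
    (add_halves ε))

end TargetSequence

end PositiveCriterion

theorem exists_weightedShift_reiterativelyHC_not_upperFrequentlyHC_general {𝕜 : Type*}
    [NontriviallyNormedField 𝕜] [TopologicalSpace.SeparableSpace 𝕜] :
    ∃ (w : ℕ → 𝕜) (Bw : C₀(ℕ, 𝕜) →L[𝕜] C₀(ℕ, 𝕜)),
      (∀ n, w n ≠ 0) ∧ (∃ C : ℝ, ∀ n, ‖w n‖ ≤ C) ∧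
      (∀ (x : C₀(ℕ, 𝕜)) (n : ℕ), Bw x n = w (n + 1) * x (n + 1)) ∧
      IsReiterativelyHypercyclic Bw ∧ ¬ IsUpperFrequentlyHypercyclic Bw := by
  obtain ⟨c, hc⟩ := NormedField.exists_one_lt_norm 𝕜
  obtain ⟨t⟩ := nonempty_targetSequence hc
  have hv (n : ℕ) : c ^ exponent t.size n ≠ 0 :=
    pow_ne_zero _ (norm_pos_iff.mp (one_pos.trans hc))
  have hw := norm_weightOfProduct_pow_le hc (envelope_succ_le (peakSet t.size) (height t.size))
  exact ⟨_, weightedBackwardShift _ hw, fun n => div_ne_zero (hv n) (hv (n - 1)), ⟨‖c‖, hw⟩,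
    weightedBackwardShift_apply hw, t.isReiterativelyHypercyclic hc hw,
    not_isUpperFrequentlyHypercyclic_weightedBackwardShift hv hw fun _ =>
      exists_upperDensity_lt_norm_pow_exponent_le hc t.monotone_size⟩

/-- There exists a bounded sequence `w` of nonzero scalars such that the weighted backward
shift `B_w` on `c₀` (the continuous linear operator `Bw` with `(Bw x) n = w (n+1) * x (n+1)`)
is reiteratively hypercyclic but not upper frequently hypercyclic. -/
theorem exists_weightedShift_reiterativelyHC_not_upperFrequentlyHC {𝕜 : Type*} [RCLike 𝕜] :
    ∃ (w : ℕ → 𝕜) (Bw : C₀(ℕ, 𝕜) →L[𝕜] C₀(ℕ, 𝕜)),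
      (∀ n, w n ≠ 0) ∧ (∃ C : ℝ, ∀ n, ‖w n‖ ≤ C) ∧
      (∀ (x : C₀(ℕ, 𝕜)) (n : ℕ), Bw x n = w (n + 1) * x (n + 1)) ∧
      (∃ x : C₀(ℕ, 𝕜), ∀ U : Set C₀(ℕ, 𝕜), IsOpen U → U.Nonempty →
        0 < upperBanachDensity {n : ℕ | (⇑Bw)^[n] x ∈ U}) ∧
      ¬ (∃ x : C₀(ℕ, 𝕜), ∀ U : Set C₀(ℕ, 𝕜), IsOpen U → U.Nonempty →
        0 < upperDensity {n : ℕ | (⇑Bw)^[n] x ∈ U}) :=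
  exists_weightedShift_reiterativelyHC_not_upperFrequentlyHC_general
end
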